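/- arXiv:1209.4972 — 2 statements merged into one kernel-verified Lean document; each statement's English description precedes it below -/
import Mathlib

section
/- For every graph G in the family 𝒢_4, the quotient ring S/J_G is Cohen–Macaulay. -/
open MvPolynomial

noncomputable section

/-- The binomial edge ideal of a simple graph `G` on vertex type `V`, inside the
polynomial ring `K[x_i, y_i : i ∈ V]`, modelled as `MvPolynomial (V ⊕ V) K`
with `x_i = X (Sum.inl i)` and `y_i = X (Sum.inr i)`. -/
def binomialEdgeIdeal (K : Type*) [Field K] {V : Type*} (G : SimpleGraph V) :
    Ideal (MvPolynomial (V ⊕ V) K) :=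
  Ideal.span { f | ∃ i j : V, G.Adj i j ∧
    f = X (Sum.inl i) * X (Sum.inr j) - X (Sum.inl j) * X (Sum.inr i) }

/-- The minimal number of generators of an ideal. -/
def mu {R : Type*} [CommRing R] (J : Ideal R) : ℕ :=
  sInf {k | ∃ s : Finset R, s.card = k ∧ Ideal.span (s : Set R) = J}

/-- The height of an ideal: the infimum of the heights of the primes containing it. -/
def htI {R : Type*} [CommRing R] (I : Ideal R) : ℕ∞ :=
  ⨅ (P : PrimeSpectrum R) (_ : I ≤ P.asIdeal), Order.height P

/-- An ideal is unmixed if all of its minimal primes have height equal to its height. -/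
def IsUnmixed {R : Type*} [CommRing R] (I : Ideal R) : Prop :=
  ∀ P ∈ I.minimalPrimes, htI P = htI I

/-- The depth of a ring `R` with respect to an ideal `m`: the supremum of the
lengths of regular sequences on `R` consisting of elements of `m`. -/
def ringDepth (R : Type*) [CommRing R] (m : Ideal R) : ℕ∞ :=
  sSup {d : ℕ∞ | ∃ l : List R, (l.length : ℕ∞) = d ∧ (∀ x ∈ l, x ∈ m) ∧
    RingTheory.Sequence.IsRegular R l}

/-- The graded maximal ideal of the quotient of a polynomial ring by an ideal `J`:
the image of the ideal generated by all the variables. -/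
def gradedMaxQuot {K σ : Type*} [Field K] (J : Ideal (MvPolynomial σ K)) :
    Ideal (MvPolynomial σ K ⧸ J) :=
  (Ideal.span (Set.range (X : σ → MvPolynomial σ K))).map (Ideal.Quotient.mk J)

/-- `S/J` is Cohen–Macaulay: its depth with respect to the graded maximal ideal
equals its Krull dimension. -/
def IsCMQuot {K σ : Type*} [Field K] (J : Ideal (MvPolynomial σ K)) : Prop :=
  (ringDepth (MvPolynomial σ K ⧸ J) (gradedMaxQuot J) : WithBot ℕ∞) =
    ringKrullDim (MvPolynomial σ K ⧸ J)

/-- A graph is a path graph if its vertices can be ordered `v_1, …, v_m` so that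
its edges are exactly `{v_i, v_{i+1}}` for `1 ≤ i ≤ m - 1`. -/
def IsPathGraph {V : Type*} (H : SimpleGraph V) : Prop :=
  ∃ (m : ℕ) (e : V ≃ Fin m), ∀ a b : V,
    H.Adj a b ↔ ((e a : ℕ) + 1 = (e b : ℕ) ∨ (e b : ℕ) + 1 = (e a : ℕ))

/-- The vertex set of a connected component, as a set of vertices. -/
def compSupp {V : Type*} (G : SimpleGraph V) (c : G.ConnectedComponent) : Set V :=
  {v | G.connectedComponentMk v = c}

end

noncomputable section

/-- The adjacency-generating relation of the graph in the family `𝒢₃` with path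
lengths `r`, `s`, `t`: three paths `u_1—…—u_r`, `v_1—…—v_s`, `w_1—…—w_t` together
with the triangle `u_1—v_1—w_1—u_1`. -/
def g3Rel (r s t : ℕ) : (Fin r ⊕ (Fin s ⊕ Fin t)) → (Fin r ⊕ (Fin s ⊕ Fin t)) → Prop
  | Sum.inl i, Sum.inl j => (i : ℕ) + 1 = (j : ℕ)
  | Sum.inr (Sum.inl i), Sum.inr (Sum.inl j) => (i : ℕ) + 1 = (j : ℕ)
  | Sum.inr (Sum.inr i), Sum.inr (Sum.inr j) => (i : ℕ) + 1 = (j : ℕ)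
  | Sum.inl i, Sum.inr (Sum.inl j) => (i : ℕ) = 0 ∧ (j : ℕ) = 0
  | Sum.inl i, Sum.inr (Sum.inr j) => (i : ℕ) = 0 ∧ (j : ℕ) = 0
  | Sum.inr (Sum.inl i), Sum.inr (Sum.inr j) => (i : ℕ) = 0 ∧ (j : ℕ) = 0
  | _, _ => False

/-- The member of the family `𝒢₃` with path lengths `r`, `s`, `t`. -/
def graphG3 (r s t : ℕ) : SimpleGraph (Fin r ⊕ (Fin s ⊕ Fin t)) :=
  SimpleGraph.fromRel (g3Rel r s t)

/-- The adjacency-generating relation of the graph in the family `𝒢₄` with path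
lengths `r`, `s`: two paths `u_1—…—u_r` and `v_1—…—v_s` together with the
edges `u_1—v_1` and `u_2—v_2`. -/
def g4Rel (r s : ℕ) : (Fin r ⊕ Fin s) → (Fin r ⊕ Fin s) → Prop
  | Sum.inl i, Sum.inl j => (i : ℕ) + 1 = (j : ℕ)
  | Sum.inr i, Sum.inr j => (i : ℕ) + 1 = (j : ℕ)
  | Sum.inl i, Sum.inr j => ((i : ℕ) = 0 ∧ (j : ℕ) = 0) ∨ ((i : ℕ) = 1 ∧ (j : ℕ) = 1)
  | _, _ => False

/-- The member of the family `𝒢₄` with path lengths `r`, `s`. -/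
def graphG4 (r s : ℕ) : SimpleGraph (Fin r ⊕ Fin s) :=
  SimpleGraph.fromRel (g4Rel r s)

/-- The sequence `L` is weakly regular on `R ⧸ I`, phrased through membership in the ideals
generated by `I` and the initial segments of `L`. -/
def IsRegularModulo {R : Type*} [CommRing R] : Ideal R → List R → Prop
  | _, [] => True
  | I, a :: L => (∀ g, a * g ∈ I → g ∈ I) ∧ IsRegularModulo (I ⊔ Ideal.span {a}) L

section RegularModulo

variable {R : Type*} [CommRing R]

lemma isRegularModulo_append (I : Ideal R) (L₁ L₂ : List R) :
    IsRegularModulo I (L₁ ++ L₂) ↔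
      IsRegularModulo I L₁ ∧ IsRegularModulo (I ⊔ Ideal.ofList L₁) L₂ := by
  induction L₁ generalizing I with
  | nil => simp [IsRegularModulo]
  | cons a L ih => simp [IsRegularModulo, ih, and_assoc, sup_assoc]

lemma isRegularModulo_iff_forall (I : Ideal R) (L : List R) :
    IsRegularModulo I L ↔
      ∀ i (h : i < L.length), ∀ g, L[i] * g ∈ I ⊔ Ideal.ofList (L.take i) →
        g ∈ I ⊔ Ideal.ofList (L.take i) := by
  induction L generalizing I with
  | nil => simp [IsRegularModulo]
  | cons a L ih =>
    rw [IsRegularModulo, ih]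
    constructor
    · rintro ⟨h₀, h⟩ (_ | i) hi g
      · simpa using h₀ g
      · simpa [sup_assoc] using h i (by simpa using hi) g
    · intro h
      refine ⟨fun g => ?_, fun i hi g => ?_⟩
      · have := h 0 (by simp) g
        rw [List.take_zero, Ideal.ofList_nil, sup_bot_eq] at this
        exact this
      · have := h (i + 1) (by simpa using hi) g
        rw [List.take_succ_cons, Ideal.ofList_cons, ← sup_assoc] at this
        exact this

lemma mk_mem_map_iff_mem_sup (I J : Ideal R) (g : R) :
    Ideal.Quotient.mk I g ∈ J.map (Ideal.Quotient.mk I) ↔ g ∈ I ⊔ J := by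
  rw [← Ideal.mem_comap, Ideal.comap_map_of_surjective _ Ideal.Quotient.mk_surjective,
    ← RingHom.ker_eq_comap_bot, Ideal.mk_ker, sup_comm]

lemma isWeaklyRegular_map_mk_iff (I : Ideal R) (L : List R) :
    RingTheory.Sequence.IsWeaklyRegular (R ⧸ I) (L.map (Ideal.Quotient.mk I)) ↔
      IsRegularModulo I L := by
  rw [RingTheory.Sequence.isWeaklyRegular_iff, isRegularModulo_iff_forall]
  simp only [List.length_map, isSMulRegular_quotient_iff_mem_of_smul_mem, List.getElem_map,
    ← List.map_take, ← Ideal.map_ofList, smul_eq_mul, Ideal.mul_top]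
  refine forall_congr' fun i => forall_congr' fun hi => ?_
  rw [Ideal.Quotient.mk_surjective.forall]
  simp only [← map_mul, mk_mem_map_iff_mem_sup]

lemma IsRegularModulo.ringKrullDim_add_length_le {I : Ideal R} {L : List R}
    (h : IsRegularModulo I L) :
    ringKrullDim (R ⧸ (I ⊔ Ideal.ofList L)) + (L.length : ℕ) ≤ ringKrullDim (R ⧸ I) := by
  induction L generalizing I with
  | nil => rw [Ideal.ofList_nil, sup_bot_eq]; simp
  | cons a L ih =>
    have h₁ := ih h.2
    have h₂ : ringKrullDim (R ⧸ (I ⊔ Ideal.span {a})) + 1 ≤ ringKrullDim (R ⧸ I) := by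
      refine ringKrullDim_succ_le_of_surjective (r := Ideal.Quotient.mk I a)
        (Ideal.Quotient.factor (le_sup_left : I ≤ I ⊔ Ideal.span {a}))
        (Ideal.Quotient.factor_surjective _) ?_ ?_
      · rw [mem_nonZeroDivisors_iff_right]
        intro z hz
        obtain ⟨g, rfl⟩ := Ideal.Quotient.mk_surjective z
        rw [mul_comm, ← map_mul, Ideal.Quotient.eq_zero_iff_mem] at hz
        exact Ideal.Quotient.eq_zero_iff_mem.2 (h.1 g hz)
      · rw [Ideal.Quotient.factor_mk, Ideal.Quotient.eq_zero_iff_mem]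
        exact Ideal.mem_sup_right (Ideal.mem_span_singleton_self a)
    refine le_trans ?_ h₂
    rw [Ideal.ofList_cons, ← sup_assoc, List.length_cons]
    push_cast
    rw [← add_assoc]
    gcongr

lemma length_le_ringKrullDim_of_isRegular {L : List R}
    (h : RingTheory.Sequence.IsRegular R L) : (L.length : WithBot ℕ∞) ≤ ringKrullDim R := by
  have hw : IsRegularModulo (⊥ : Ideal R) L := by
    rw [isRegularModulo_iff_forall]
    intro i hi g hg
    have := (isSMulRegular_quotient_iff_mem_of_smul_mem _ _).1 (h.regular_mod_prev i hi) g
    simp only [smul_eq_mul, Ideal.mul_top] at this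
    simp only [bot_sup_eq] at hg ⊢
    exact this hg
  have hne : Ideal.ofList L ≠ ⊤ := by
    have := h.top_ne_smul
    simpa [eq_comm] using this
  have hdim := hw.ringKrullDim_add_length_le
  rw [bot_sup_eq, ringKrullDim_eq_of_ringEquiv (RingEquiv.quotientBot R)] at hdim
  have : Nontrivial (R ⧸ Ideal.ofList L) := Ideal.Quotient.nontrivial_iff.2 hne
  refine le_trans ?_ hdim
  calc (L.length : WithBot ℕ∞) = 0 + (L.length : ℕ) := by simp
    _ ≤ _ := by
      gcongr
      exact ringKrullDim_nonneg_of_nontrivial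

/-- If every `g` with `g * f ∈ I` lies in an ideal `I'` satisfying `I' * f ≤ I`, compatibly with the
reduction modulo a sequence that is regular modulo `I`, then the sequence stays regular after
adding `f` to `I`. -/
lemma mem_of_mul_mem_sup_span_singleton {I I' : Ideal R} {a f : R}
    (ha : ∀ g, a * g ∈ I → g ∈ I) (hf : ∀ g ∈ I', g * f ∈ I)
    (hcolon : ∀ g, g * f ∈ I ⊔ Ideal.span {a} → g ∈ I' ⊔ Ideal.span {a})
    {g : R} (hg : a * g ∈ I ⊔ Ideal.span {f}) : g ∈ I ⊔ Ideal.span {f} := by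
  obtain ⟨c, hc, d, hd, hcd⟩ := Submodule.mem_sup.1 hg
  obtain ⟨h, rfl⟩ := Ideal.mem_span_singleton'.1 hd
  have hh : h * f ∈ I ⊔ Ideal.span {a} := by
    rw [show h * f = -c + g * a by linear_combination hcd]
    exact Submodule.add_mem_sup (neg_mem hc)
      (Ideal.mul_mem_left _ _ (Ideal.mem_span_singleton_self a))
  obtain ⟨i, hi, d', hd', rfl⟩ := Submodule.mem_sup.1 (hcolon h hh)
  obtain ⟨e, rfl⟩ := Ideal.mem_span_singleton'.1 hd'
  have : g - e * f ∈ I := by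
    apply ha
    rw [show a * (g - e * f) = c + i * f by linear_combination -hcd]
    exact add_mem hc (hf i hi)
  rw [show g = (g - e * f) + e * f by ring]
  exact Submodule.add_mem_sup this (Ideal.mul_mem_left _ _ (Ideal.mem_span_singleton_self f))

end RegularModulo

section Graded

attribute [local instance] MvPolynomial.gradedAlgebra

variable {K σ : Type*} [Field K]

/-- The polynomial `p` is homogeneous of positive degree. -/
def IsPosHomogeneous (p : MvPolynomial σ K) : Prop := ∃ n, p.IsHomogeneous (n + 1)

/-- The ideal `I` contains all homogeneous components of its elements. -/
def IsGradedIdeal (I : Ideal (MvPolynomial σ K)) : Prop :=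
  I.IsHomogeneous (homogeneousSubmodule σ K)

lemma IsPosHomogeneous.constantCoeff {p : MvPolynomial σ K} (h : IsPosHomogeneous p) :
    constantCoeff p = 0 := by
  obtain ⟨n, hn⟩ := h
  rw [constantCoeff_eq]
  exact hn.coeff_eq_zero (by simp)

lemma isGradedIdeal_span {s : Set (MvPolynomial σ K)} (h : ∀ p ∈ s, IsPosHomogeneous p) :
    IsGradedIdeal (Ideal.span s) :=
  Ideal.homogeneous_span _ _ fun p hp => by
    obtain ⟨n, hn⟩ := h p hp
    exact ⟨n + 1, hn⟩

lemma isGradedIdeal_bot : IsGradedIdeal (⊥ : Ideal (MvPolynomial σ K)) :=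
  Ideal.IsHomogeneous.bot _

lemma IsGradedIdeal.sup {I J : Ideal (MvPolynomial σ K)} (hI : IsGradedIdeal I)
    (hJ : IsGradedIdeal J) : IsGradedIdeal (I ⊔ J) :=
  Ideal.IsHomogeneous.sup hI hJ

lemma IsGradedIdeal.sup_span_singleton {I : Ideal (MvPolynomial σ K)} (hI : IsGradedIdeal I)
    {a : MvPolynomial σ K} (ha : IsPosHomogeneous a) : IsGradedIdeal (I ⊔ Ideal.span {a}) :=
  hI.sup (isGradedIdeal_span (by simpa using ha))

lemma isGradedIdeal_ofList {L : List (MvPolynomial σ K)} (h : ∀ p ∈ L, IsPosHomogeneous p) :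
    IsGradedIdeal (Ideal.ofList L) :=
  isGradedIdeal_span h

lemma IsGradedIdeal.mem_of_mul_mem {I : Ideal (MvPolynomial σ K)} (hI : IsGradedIdeal I)
    {t g : MvPolynomial σ K} (ht : constantCoeff t = 1) (h : t * g ∈ I) : g ∈ I := by
  rw [mem_iff_homogeneousComponent_mem hI]
  intro d
  induction d using Nat.strong_induction_on with
  | _ d ih =>
    set g' := g - ∑ j ∈ Finset.range d, homogeneousComponent j g with hg'
    have hlow : ∀ m : σ →₀ ℕ, m.degree < d → coeff m g' = 0 := by
      intro m hm
      rw [hg', coeff_sub, coeff_sum]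
      simp only [coeff_homogeneousComponent]
      simp [hm]
    have htop : homogeneousComponent d g' = homogeneousComponent d g := by
      ext m
      rw [coeff_homogeneousComponent, coeff_homogeneousComponent]
      split_ifs with hm
      · rw [hg', coeff_sub, coeff_sum]
        simp [coeff_homogeneousComponent, hm]
      · rfl
    have hzero : homogeneousComponent d ((1 - t) * g') = 0 := by
      ext m
      rw [coeff_homogeneousComponent, coeff_zero]
      split_ifs with hm
      · classical
        rw [coeff_mul]
        refine Finset.sum_eq_zero fun ⟨a, b⟩ hab => ?_
        rw [Finset.HasAntidiagonal.mem_antidiagonal] at hab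
        rcases eq_or_ne a 0 with rfl | ha
        · have : coeff 0 (1 - t) = 0 := by
            rw [← constantCoeff_eq, map_sub, ht, map_one, sub_self]
          simp [this]
        · have hb : coeff b g' = 0 := by
            apply hlow
            have h₁ : a.degree + b.degree = d := by
              rw [← hm, ← hab]; simp
            have h₂ : a.degree ≠ 0 := by simpa [Finsupp.degree_eq_zero_iff] using ha
            omega
          simp [hb]
      · rfl
    have hmem : t * g' ∈ I := by
      rw [hg', mul_sub]
      exact sub_mem h (Ideal.mul_mem_left _ _ (sum_mem fun j hj => ih j (Finset.mem_range.1 hj)))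
    have := homogeneousComponent_mem_of_mem hI hmem d
    rw [← htop, show g' = t * g' + (1 - t) * g' by ring, map_add, hzero, add_zero]
    exact this

/-- A graded form of Nakayama's lemma for the ideal quotient `I : b`. -/
lemma IsGradedIdeal.le_of_le_sup_mul [Finite σ] {I N : Ideal (MvPolynomial σ K)}
    (hI : IsGradedIdeal I) {a : MvPolynomial σ K} (ha : constantCoeff a = 0)
    (h : ∀ g ∈ N, ∃ e ∈ N, g - a * e ∈ I) : N ≤ I := by
  have hfg : N.FG := IsNoetherian.noetherian N
  obtain ⟨t, ht, hle⟩ := Submodule.exists_sub_one_mem_and_smul_le_of_fg_of_le_sup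
    (I := Ideal.span {a}) (N := I) hfg le_rfl (fun g hg => by
      obtain ⟨e, he, hge⟩ := h g hg
      rw [show g = (g - a * e) + a * e by ring]
      exact Submodule.add_mem_sup hge
        (Submodule.smul_mem_smul (Ideal.mem_span_singleton_self a) he))
  intro g hg
  refine hI.mem_of_mul_mem (t := t) ?_ (hle (Submodule.smul_mem_pointwise_smul g t N hg))
  obtain ⟨c, hc⟩ := Ideal.mem_span_singleton'.1 ht
  have := congrArg MvPolynomial.constantCoeff hc
  simp only [map_mul, ha, mul_zero, map_sub, map_one] at this
  exact (sub_eq_zero.1 this.symm)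

lemma isRegularModulo_map_X (s : Set σ) {L : List σ} (hL : L.Nodup) (hs : ∀ i ∈ L, i ∉ s) :
    IsRegularModulo (Ideal.span ((X : σ → MvPolynomial σ K) '' s)) (L.map X) := by
  induction L generalizing s with
  | nil => trivial
  | cons i L ih =>
    rw [List.nodup_cons] at hL
    simp only [List.forall_mem_cons] at hs
    refine ⟨fun g hg => ?_, ?_⟩
    · rw [mem_ideal_span_X_image] at hg ⊢
      intro m hm
      obtain ⟨j, hj, hmj⟩ := hg (m + Finsupp.single i 1) (by
        rw [mem_support_iff, add_comm, coeff_X_mul]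
        exact mem_support_iff.1 hm)
      refine ⟨j, hj, ?_⟩
      have : i ≠ j := fun h => hs.1 (h ▸ hj)
      simpa [Finsupp.single_apply, this] using hmj
    · rw [← Ideal.span_union, ← Set.image_singleton, ← Set.image_union]
      refine ih _ hL.2 fun j hj => ?_
      simp only [Set.union_singleton, Set.mem_insert_iff, not_or]
      exact ⟨fun h => hL.1 (h ▸ hj), hs.2 j hj⟩

variable [Finite σ]

lemma IsRegularModulo.swap {I : Ideal (MvPolynomial σ K)} (hI : IsGradedIdeal I)
    {a b : MvPolynomial σ K} {L : List (MvPolynomial σ K)} (ha : IsPosHomogeneous a)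
    (h : IsRegularModulo I (a :: b :: L)) : IsRegularModulo I (b :: a :: L) := by
  obtain ⟨h₁, h₂, h₃⟩ := h
  have hb : ∀ g, b * g ∈ I → g ∈ I := by
    have : I.colon {b} ≤ I := by
      refine hI.le_of_le_sup_mul ha.constantCoeff fun g hg => ?_
      rw [Submodule.mem_colon_singleton, smul_eq_mul, mul_comm] at hg
      obtain ⟨i, hi, d, hd, rfl⟩ := Submodule.mem_sup.1 (h₂ g (Ideal.mem_sup_left hg))
      obtain ⟨e, rfl⟩ := Ideal.mem_span_singleton'.1 hd
      refine ⟨e, ?_, by simpa [mul_comm] using hi⟩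
      rw [Submodule.mem_colon_singleton, smul_eq_mul]
      apply h₁
      rw [show a * (e * b) = b * (i + e * a) - b * i by ring]
      exact sub_mem hg (Ideal.mul_mem_left _ _ hi)
    intro g hg
    apply this
    rwa [Submodule.mem_colon_singleton, smul_eq_mul, mul_comm]
  refine ⟨hb, fun g hg => ?_, by rwa [sup_right_comm]⟩
  refine mem_of_mul_mem_sup_span_singleton (I' := I) h₁
    (fun g hg => Ideal.mul_mem_right _ _ hg) (fun g hg => h₂ g (by rwa [mul_comm])) hg

lemma IsRegularModulo.perm {I : Ideal (MvPolynomial σ K)} (hI : IsGradedIdeal I)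
    {L₁ L₂ : List (MvPolynomial σ K)} (hL : ∀ p ∈ L₁, IsPosHomogeneous p) (hp : L₁.Perm L₂)
    (h : IsRegularModulo I L₁) : IsRegularModulo I L₂ := by
  induction hp generalizing I with
  | nil => trivial
  | cons a _ ih =>
    simp only [List.forall_mem_cons] at hL
    exact ⟨h.1, ih (hI.sup_span_singleton hL.1) hL.2 h.2⟩
  | swap a b L =>
    simp only [List.forall_mem_cons] at hL
    exact h.swap hI hL.1
  | trans h₁ _ ih₁ ih₂ => exact ih₂ hI (fun p hp => hL p (h₁.mem_iff.2 hp)) (ih₁ hI hL h)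

lemma IsRegularModulo.sup_span_singleton_of_colon {I I' : Ideal (MvPolynomial σ K)}
    (hI' : IsGradedIdeal I') {f : MvPolynomial σ K} {L : List (MvPolynomial σ K)}
    (hL : ∀ p ∈ L, IsPosHomogeneous p) (h : IsRegularModulo I L) (hf : ∀ g ∈ I', g * f ∈ I)
    (hcolon : ∀ g, g * f ∈ I ⊔ Ideal.ofList L → g ∈ I' ⊔ Ideal.ofList L) :
    IsRegularModulo (I ⊔ Ideal.span {f}) L ∧ ∀ g, g * f ∈ I → g ∈ I' := by
  induction L generalizing I I' with
  | nil => exact ⟨trivial, by simpa using hcolon⟩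
  | cons a L ih =>
    simp only [List.forall_mem_cons] at hL
    obtain ⟨h₁, h₂⟩ := h
    simp only [Ideal.ofList_cons, ← sup_assoc] at hcolon
    have hf' : ∀ g ∈ I' ⊔ Ideal.span {a}, g * f ∈ I ⊔ Ideal.span {a} := by
      intro g hg
      obtain ⟨i, hi, d, hd, rfl⟩ := Submodule.mem_sup.1 hg
      rw [add_mul]
      exact Submodule.add_mem_sup (hf i hi) (Ideal.mul_mem_right _ _ hd)
    obtain ⟨h₃, h₄⟩ := ih (hI'.sup_span_singleton hL.1) hL.2 h₂ hf' hcolon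
    refine ⟨⟨fun g hg => mem_of_mul_mem_sup_span_singleton h₁ hf h₄ hg, by
      rwa [sup_right_comm]⟩, ?_⟩
    have : I.colon {f} ≤ I' := by
      refine hI'.le_of_le_sup_mul hL.1.constantCoeff fun g hg => ?_
      rw [Submodule.mem_colon_singleton, smul_eq_mul] at hg
      obtain ⟨i, hi, d, hd, rfl⟩ := Submodule.mem_sup.1 (h₄ g (Ideal.mem_sup_left hg))
      obtain ⟨e, rfl⟩ := Ideal.mem_span_singleton'.1 hd
      refine ⟨e, ?_, by simpa [mul_comm] using hi⟩
      rw [Submodule.mem_colon_singleton, smul_eq_mul]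
      apply h₁
      rw [show a * (e * f) = (i + e * a) * f - i * f by ring]
      exact sub_mem hg (hf i hi)
    intro g hg
    apply this
    rwa [Submodule.mem_colon_singleton, smul_eq_mul]

end Graded

section Chain

variable {K σ : Type*} [Field K]

/-- The entries of a list of pairs, in order. -/
def entries {A : Type*} (t : List (A × A)) : List A := t.flatMap fun w => [w.1, w.2]

/-- The `2`-minors of consecutive pairs in the list starting with `(p, q)` and continuing
with `t`. -/
def chainMinors {A : Type*} [CommRing A] (p q : A) : List (A × A) → List A
  | [] => []
  | w :: t => (p * w.2 - q * w.1) :: chainMinors w.1 w.2 t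

/-- The linear forms identifying each second entry with the following first entry, together with
the last second entry, in the list of pairs starting with `(p, q)` and continuing with `t`. -/
def chainParams {A : Type*} [CommRing A] (q : A) : List (A × A) → List A
  | [] => [q]
  | w :: t => (w.1 - q) :: chainParams w.2 t

/-- All entries are linear forms. -/
def IsLinearPairs (t : List (MvPolynomial σ K × MvPolynomial σ K)) : Prop :=
  ∀ w ∈ t, w.1.IsHomogeneous 1 ∧ w.2.IsHomogeneous 1

lemma length_chainMinors {A : Type*} [CommRing A] (p q : A) (t : List (A × A)) :
    (chainMinors p q t).length = t.length := by
  induction t generalizing p q with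
  | nil => rfl
  | cons w t ih => simp [chainMinors, ih]

lemma length_chainParams {A : Type*} [CommRing A] (q : A) (t : List (A × A)) :
    (chainParams q t).length = t.length + 1 := by
  induction t generalizing q with
  | nil => rfl
  | cons w t ih => simp [chainParams, ih]

lemma isPosHomogeneous_of_linear {p : MvPolynomial σ K} (h : p.IsHomogeneous 1) :
    IsPosHomogeneous p := ⟨0, h⟩

lemma isPosHomogeneous_minor {p q x y : MvPolynomial σ K} (hp : p.IsHomogeneous 1)
    (hq : q.IsHomogeneous 1) (hx : x.IsHomogeneous 1) (hy : y.IsHomogeneous 1) :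
    IsPosHomogeneous (p * y - q * x) :=
  ⟨1, (hp.mul hy).sub (hq.mul hx)⟩

lemma IsLinearPairs.entries {t : List (MvPolynomial σ K × MvPolynomial σ K)}
    (ht : IsLinearPairs t) : ∀ p ∈ entries t, IsPosHomogeneous p := by
  intro p hp
  simp only [_root_.entries, List.mem_flatMap, List.mem_cons, List.not_mem_nil, or_false] at hp
  obtain ⟨w, hw, rfl | rfl⟩ := hp
  · exact isPosHomogeneous_of_linear (ht w hw).1
  · exact isPosHomogeneous_of_linear (ht w hw).2

lemma IsLinearPairs.chainMinors {t : List (MvPolynomial σ K × MvPolynomial σ K)}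
    (ht : IsLinearPairs t) {p q : MvPolynomial σ K} (hp : p.IsHomogeneous 1)
    (hq : q.IsHomogeneous 1) : ∀ f ∈ chainMinors p q t, IsPosHomogeneous f := by
  induction t generalizing p q with
  | nil => simp [_root_.chainMinors]
  | cons w t ih =>
    simp only [IsLinearPairs, List.forall_mem_cons] at ht
    simp only [_root_.chainMinors, List.forall_mem_cons]
    exact ⟨isPosHomogeneous_minor hp hq ht.1.1 ht.1.2, ih ht.2 ht.1.1 ht.1.2⟩

lemma IsLinearPairs.chainParams {t : List (MvPolynomial σ K × MvPolynomial σ K)}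
    (ht : IsLinearPairs t) {q : MvPolynomial σ K}
    (hq : q.IsHomogeneous 1) : ∀ f ∈ chainParams q t, IsPosHomogeneous f := by
  induction t generalizing q with
  | nil => simpa [_root_.chainParams] using isPosHomogeneous_of_linear hq
  | cons w t ih =>
    simp only [IsLinearPairs, List.forall_mem_cons] at ht
    simp only [_root_.chainParams, List.forall_mem_cons]
    exact ⟨isPosHomogeneous_of_linear (ht.1.1.sub hq), ih ht.2 ht.1.2⟩

variable [Finite σ]

/-- Attaching a new vertex `(x, y)` to a vertex `(p, q)` by an edge. -/
lemma IsRegularModulo.attach {I : Ideal (MvPolynomial σ K)} (hI : IsGradedIdeal I)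
    {p q x y : MvPolynomial σ K} (hp : p.IsHomogeneous 1) (hq : q.IsHomogeneous 1)
    (hx : x.IsHomogeneous 1) (hy : y.IsHomogeneous 1) {L : List (MvPolynomial σ K)}
    (hL : ∀ f ∈ L, IsPosHomogeneous f) (h : IsRegularModulo I (q :: x :: y :: L)) :
    IsRegularModulo I ((p * y - q * x) :: (x - q) :: y :: L) := by
  have hq' := isPosHomogeneous_of_linear hq
  have hx' := isPosHomogeneous_of_linear hx
  have hy' := isPosHomogeneous_of_linear hy
  have hxq := isPosHomogeneous_of_linear (hx.sub hq)
  have h₁ : IsRegularModulo I (L ++ [q, x, y]) :=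
    h.perm hI (by simpa [hq', hx', hy'] using hL)
      (List.perm_append_comm (l₁ := [q, x, y]) (l₂ := L))
  rw [isRegularModulo_append] at h₁
  have hI₀ := hI.sup (isGradedIdeal_ofList hL)
  have hspan : ∀ (I₀ : Ideal (MvPolynomial σ K)), I₀ ⊔ Ideal.span {q} ⊔ Ideal.span {x - q} =
      I₀ ⊔ Ideal.span {q} ⊔ Ideal.span {x} := by
    intro I₀
    rw [sup_assoc, sup_assoc, ← Ideal.span_union, ← Ideal.span_union]
    congr 1
    simp only [Set.singleton_union]
    refine le_antisymm (Ideal.span_le.2 ?_) (Ideal.span_le.2 ?_) <;>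
      simp only [Set.insert_subset_iff, Set.singleton_subset_iff, SetLike.mem_coe,
        Ideal.mem_span_pair]
    · exact ⟨⟨1, 0, by ring⟩, -1, 1, by ring⟩
    · exact ⟨⟨1, 0, by ring⟩, 1, 1, by ring⟩
  have h₂ : IsRegularModulo (I ⊔ Ideal.ofList L) [q, x - q, y] := by
    obtain ⟨ha, hb, hc⟩ := h₁.2
    refine ⟨ha, fun g hg => hb g ?_, by rwa [hspan]⟩
    rw [show x * g = (x - q) * g + g * q by ring]
    exact add_mem hg
      (Ideal.mem_sup_right (Ideal.mul_mem_left _ _ (Ideal.mem_span_singleton_self q)))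
  have h₃ : IsRegularModulo (I ⊔ Ideal.ofList L) [x - q, y, q] :=
    h₂.perm hI₀ (by simp [hq', hxq, hy'])
      (List.perm_append_comm (l₁ := [q]) (l₂ := [x - q, y]))
  have h₄ : IsRegularModulo (I ⊔ Ideal.ofList L) [x - q, y, p * y - q * x] := by
    obtain ⟨ha, hb, hc, -⟩ := h₃
    refine ⟨ha, hb, fun g hg => hc g (hc _ ?_), trivial⟩
    rw [show q * (q * g) = -(p * g) * -y + -(q * g) * (x - q) - (p * y - q * x) * g by ring]
    refine sub_mem (add_mem (Ideal.mul_mem_left _ _ (neg_mem ?_)) (Ideal.mul_mem_left _ _ ?_)) hg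
    · exact Ideal.mem_sup_right (Ideal.mem_span_singleton_self y)
    · exact Ideal.mem_sup_left (Ideal.mem_sup_right (Ideal.mem_span_singleton_self _))
  have hf := isPosHomogeneous_minor hp hq hx hy
  have h₅ : IsRegularModulo I (L ++ [x - q, y, p * y - q * x]) :=
    (isRegularModulo_append _ _ _).2 ⟨h₁.1, h₄⟩
  refine h₅.perm hI ?_ (List.perm_append_comm.trans ?_)
  · intro f hf'
    simp only [List.mem_append, List.mem_cons, List.not_mem_nil, or_false] at hf'
    rcases hf' with h | rfl | rfl | rfl
    exacts [hL _ h, hxq, hy', hf]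
  · exact List.Perm.append_right L
      (List.perm_append_comm (l₁ := [x - q, y]) (l₂ := [p * y - q * x]))

/-- Attaching a path to a vertex `(p, q)`. -/
lemma IsRegularModulo.attach_chain {I : Ideal (MvPolynomial σ K)} (hI : IsGradedIdeal I)
    {t : List (MvPolynomial σ K × MvPolynomial σ K)} (ht : IsLinearPairs t)
    {p q : MvPolynomial σ K} (hp : p.IsHomogeneous 1) (hq : q.IsHomogeneous 1)
    {L : List (MvPolynomial σ K)} (hL : ∀ f ∈ L, IsPosHomogeneous f)
    (h : IsRegularModulo I (q :: entries t ++ L)) :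
    IsRegularModulo I (chainMinors p q t ++ (chainParams q t ++ L)) := by
  induction t generalizing p q L with
  | nil => exact h
  | cons w t ih =>
    have ht' := ht
    simp only [IsLinearPairs, List.forall_mem_cons] at ht'
    obtain ⟨⟨hx, hy⟩, ht₁⟩ := ht'
    have hf := isPosHomogeneous_minor hp hq hx hy
    have hxq := isPosHomogeneous_of_linear (hx.sub hq)
    have hent := IsLinearPairs.entries ht₁
    have h₁ := IsRegularModulo.attach hI hp hq hx hy (L := entries t ++ L)
      (by rw [List.forall_mem_append]; exact ⟨hent, hL⟩) (by simpa [entries] using h)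
    have h₂ : IsRegularModulo I
        (w.2 :: entries t ++ ((p * w.2 - q * w.1) :: (w.1 - q) :: L)) := by
      refine h₁.perm hI ?_ ?_
      · simp only [List.forall_mem_cons, List.forall_mem_append]
        exact ⟨hf, hxq, isPosHomogeneous_of_linear hy, hent, hL⟩
      · simp only [← Multiset.coe_eq_coe, ← Multiset.cons_coe, ← Multiset.coe_add,
          ← Multiset.singleton_add]
        abel
    have h₃ := ih ht₁ hx hy (by
      simp only [List.forall_mem_cons]
      exact ⟨hf, hxq, hL⟩) h₂
    refine h₃.perm hI ?_ ?_
    · simp only [List.forall_mem_cons, List.forall_mem_append]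
      exact ⟨IsLinearPairs.chainMinors ht₁ hx hy, IsLinearPairs.chainParams ht₁ hy, hf, hxq, hL⟩
    · simp only [chainMinors, chainParams, ← Multiset.coe_eq_coe, ← Multiset.cons_coe,
        ← Multiset.coe_add, ← Multiset.singleton_add]
      abel

end Chain

section FiveVariables

variable {K : Type*} [Field K]

/-- The exponent vector `(a, b, c, d, e)`. -/
def expVec (a b c d e : ℕ) : Fin 5 →₀ ℕ := Finsupp.equivFunOnFinite.symm ![a, b, c, d, e]

/-- The monomial with exponent vector `(a, b, c, d, e)`. -/
def monom (K : Type*) [Field K] (a b c d e : ℕ) : MvPolynomial (Fin 5) K :=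
  X 0 ^ a * X 1 ^ b * X 2 ^ c * X 3 ^ d * X 4 ^ e

lemma monom_eq_monomial (a b c d e : ℕ) :
    monom K a b c d e = monomial (expVec a b c d e) 1 := by
  rw [monomial_eq, Finsupp.prod_fintype _ _ (by simp)]
  simp [Fin.prod_univ_five, expVec, monom]

lemma coeff_mul_monom (h : MvPolynomial (Fin 5) K) (a b c d e a' b' c' d' e' : ℕ) :
    coeff (expVec a b c d e) (h * monom K a' b' c' d' e') =
      if a' ≤ a ∧ b' ≤ b ∧ c' ≤ c ∧ d' ≤ d ∧ e' ≤ e then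
        coeff (expVec (a - a') (b - b') (c - c') (d - d') (e - e')) h else 0 := by
  rw [monom_eq_monomial, coeff_mul_monomial']
  have h₁ : expVec a' b' c' d' e' ≤ expVec a b c d e ↔
      a' ≤ a ∧ b' ≤ b ∧ c' ≤ c ∧ d' ≤ d ∧ e' ≤ e := by
    rw [← Finsupp.coe_le_coe, Pi.le_def]
    simp [expVec, Fin.forall_fin_succ]
  have h₂ : expVec a b c d e - expVec a' b' c' d' e' =
      expVec (a - a') (b - b') (c - c') (d - d') (e - e') := by
    ext i
    fin_cases i <;> simp [expVec]
  simp only [h₁, h₂, mul_one]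

lemma coeff_C_mul_monom (k : K) (a b c d e a' b' c' d' e' : ℕ) :
    coeff (expVec a b c d e) (C k * monom K a' b' c' d' e') =
      if a' = a ∧ b' = b ∧ c' = c ∧ d' = d ∧ e' = e then k else 0 := by
  rw [coeff_C_mul, monom_eq_monomial, coeff_monomial]
  have : expVec a' b' c' d' e' = expVec a b c d e ↔
      a' = a ∧ b' = b ∧ c' = c ∧ d' = d ∧ e' = e := by
    rw [expVec, expVec, EmbeddingLike.apply_eq_iff_eq]
    simp
  simp [this]

/-- The complete intersection in five variables obtained from the path on six vertices. -/
def pathSection (K : Type*) [Field K] : Ideal (MvPolynomial (Fin 5) K) :=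
  Ideal.span {X 0 * X 0, X 1 * X 1 - X 0 * X 2, X 2 * X 2 - X 1 * X 3,
    X 3 * X 3 - X 2 * X 4, X 4 * X 4}

/-- The ideal quotient of `pathSection` by `z₀ z₄ - z₁ z₃`. -/
def colonSection (K : Type*) [Field K] : Ideal (MvPolynomial (Fin 5) K) :=
  Ideal.span {X 0 * X 0, X 4 * X 4, X 1 * X 1 - X 0 * X 2, X 2 * X 2, X 3 * X 3 - X 2 * X 4,
    X 1 * X 2, X 1 * X 3, X 2 * X 3, X 0 * X 1, X 3 * X 4}

/-- A functional vanishing on `pathSection` that takes the value `1` on the socle generator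
`z₀ z₁ z₂ z₃ z₄`. -/
def socleFunctional (p : MvPolynomial (Fin 5) K) : K :=
  coeff (expVec 1 1 1 1 1) p + coeff (expVec 0 3 0 1 1) p + coeff (expVec 1 0 3 0 1) p +
    coeff (expVec 1 1 0 3 0) p + coeff (expVec 0 2 2 0 1) p + coeff (expVec 1 0 2 2 0) p +
    coeff (expVec 0 2 1 2 0) p + coeff (expVec 0 1 3 1 0) p + coeff (expVec 0 0 5 0 0) p

lemma socleFunctional_mul_eq_zero {p : MvPolynomial (Fin 5) K} (hp : p ∈ pathSection K)
    (h : MvPolynomial (Fin 5) K) : socleFunctional (h * p) = 0 := by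
  induction hp using Submodule.span_induction generalizing h with
  | mem p hp =>
    have h₀ : (X 0 * X 0 : MvPolynomial (Fin 5) K) = monom K 2 0 0 0 0 := by simp [monom]; ring
    have h₁ : (X 1 * X 1 - X 0 * X 2 : MvPolynomial (Fin 5) K) =
        monom K 0 2 0 0 0 - monom K 1 0 1 0 0 := by simp [monom]; ring
    have h₂ : (X 2 * X 2 - X 1 * X 3 : MvPolynomial (Fin 5) K) =
        monom K 0 0 2 0 0 - monom K 0 1 0 1 0 := by simp [monom]; ring
    have h₃ : (X 3 * X 3 - X 2 * X 4 : MvPolynomial (Fin 5) K) =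
        monom K 0 0 0 2 0 - monom K 0 0 1 0 1 := by simp [monom]; ring
    have h₄ : (X 4 * X 4 : MvPolynomial (Fin 5) K) = monom K 0 0 0 0 2 := by simp [monom]; ring
    rw [h₀, h₁, h₂, h₃, h₄] at hp
    simp only [Set.mem_insert_iff, Set.mem_singleton_iff] at hp
    rcases hp with rfl | rfl | rfl | rfl | rfl <;>
      simp only [socleFunctional, mul_sub, coeff_sub, coeff_mul_monom] <;>
      norm_num
    ring
  | zero => simp [socleFunctional]
  | add p q _ _ hp hq =>
    have := congrArg₂ (· + ·) (hp h) (hq h)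
    simp only [socleFunctional, mul_add, coeff_add, add_zero] at this ⊢
    linear_combination this
  | smul a p _ hp => simpa [mul_assoc] using hp (h * a)

lemma socleFunctional_mul (h : MvPolynomial (Fin 5) K) :
    socleFunctional (h * (X 0 * X 4 - X 1 * X 3)) = -(coeff (expVec 1 0 1 0 1) h +
      coeff (expVec 0 2 0 0 1) h + coeff (expVec 1 0 0 2 0) h) := by
  have h₁ : (X 0 * X 4 - X 1 * X 3 : MvPolynomial (Fin 5) K) =
      monom K 1 0 0 0 1 - monom K 0 1 0 1 0 := by simp [monom]
  simp only [h₁, socleFunctional, mul_sub, coeff_sub, coeff_mul_monom]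
  norm_num
  ring

/-- A general element of a complement of `colonSection`. -/
def normalForm (c : Fin 12 → K) : MvPolynomial (Fin 5) K :=
  C (c 0) * monom K 0 0 0 0 0 + C (c 1) * monom K 1 0 0 0 0 + C (c 2) * monom K 0 1 0 0 0 +
    C (c 3) * monom K 0 0 1 0 0 + C (c 4) * monom K 0 0 0 1 0 + C (c 5) * monom K 0 0 0 0 1 +
    C (c 6) * monom K 1 0 0 0 1 + C (c 7) * monom K 1 0 1 0 0 + C (c 8) * monom K 0 0 1 0 1 +
    C (c 9) * monom K 0 1 0 0 1 + C (c 10) * monom K 1 0 0 1 0 + C (c 11) * monom K 1 0 1 0 1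

/-- The action of multiplication by a variable on the coefficients of a normal form. -/
def normalFormShift (c : Fin 12 → K) : Fin 5 → Fin 12 → K :=
  ![![0, c 0, 0, 0, 0, 0, c 5, c 3, 0, 0, c 4, c 8],
    ![0, 0, c 0, 0, 0, 0, 0, c 2, 0, c 5, 0, c 9],
    ![0, 0, 0, c 0, 0, 0, 0, c 1, c 5, 0, 0, c 6],
    ![0, 0, 0, 0, c 0, 0, 0, 0, c 4, 0, c 1, c 10],
    ![0, 0, 0, 0, 0, c 0, c 1, 0, c 3, c 2, 0, c 7]]

lemma colonSection_relations :
    let q := Ideal.Quotient.mk (colonSection K)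
    q (X 0) * q (X 0) = 0 ∧ q (X 4) * q (X 4) = 0 ∧ q (X 1) * q (X 1) = q (X 0) * q (X 2) ∧
    q (X 2) * q (X 2) = 0 ∧ q (X 3) * q (X 3) = q (X 2) * q (X 4) ∧ q (X 1) * q (X 2) = 0 ∧
    q (X 1) * q (X 3) = 0 ∧ q (X 2) * q (X 3) = 0 ∧ q (X 0) * q (X 1) = 0 ∧
    q (X 3) * q (X 4) = 0 := by
  intro q
  simp only [q, ← map_mul, Ideal.Quotient.eq_zero_iff_mem, Ideal.Quotient.mk_eq_mk_iff_sub_mem]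
  refine ⟨?_, ?_, ?_, ?_, ?_, ?_, ?_, ?_, ?_, ?_⟩ <;> exact Ideal.subset_span (by simp)

lemma normalForm_mul_X_sub_mem (c : Fin 12 → K) (i : Fin 5) :
    normalForm c * X i - normalForm (normalFormShift c i) ∈ colonSection K := by
  obtain ⟨h₁, h₂, h₃, h₄, h₅, h₆, h₇, h₈, h₉, h₁₀⟩ := colonSection_relations (K := K)
  rw [← Ideal.Quotient.mk_eq_mk_iff_sub_mem]
  fin_cases i <;> simp [normalForm, normalFormShift, monom] <;> grind

lemma exists_sub_normalForm_mem (h : MvPolynomial (Fin 5) K) :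
    ∃ c, h - normalForm c ∈ colonSection K := by
  induction h using MvPolynomial.induction_on with
  | C a => exact ⟨![a, 0, 0, 0, 0, 0, 0, 0, 0, 0, 0, 0], by simp [normalForm, monom]⟩
  | add p q hp hq =>
    obtain ⟨c, hc⟩ := hp
    obtain ⟨d, hd⟩ := hq
    refine ⟨c + d, ?_⟩
    have : normalForm (c + d) = normalForm c + normalForm d := by
      simp only [normalForm, Pi.add_apply, map_add]
      ring
    rw [this, add_sub_add_comm]
    exact add_mem hc hd
  | mul_X p i hp =>
    obtain ⟨c, hc⟩ := hp
    refine ⟨normalFormShift c i, ?_⟩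
    have := add_mem (Ideal.mul_mem_right (X i) _ hc) (normalForm_mul_X_sub_mem c i)
    rwa [sub_mul, sub_add_sub_cancel] at this

lemma pathSection_relations :
    let q := Ideal.Quotient.mk (pathSection K)
    q (X 0) * q (X 0) = 0 ∧ q (X 1) * q (X 1) = q (X 0) * q (X 2) ∧
    q (X 2) * q (X 2) = q (X 1) * q (X 3) ∧ q (X 3) * q (X 3) = q (X 2) * q (X 4) ∧
    q (X 4) * q (X 4) = 0 := by
  intro q
  simp only [q, ← map_mul, Ideal.Quotient.eq_zero_iff_mem, Ideal.Quotient.mk_eq_mk_iff_sub_mem]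
  refine ⟨?_, ?_, ?_, ?_, ?_⟩ <;> exact Ideal.subset_span (by simp)

lemma mul_mem_pathSection {h : MvPolynomial (Fin 5) K} (hh : h ∈ colonSection K) :
    h * (X 0 * X 4 - X 1 * X 3) ∈ pathSection K := by
  obtain ⟨h₁, h₂, h₃, h₄, h₅⟩ := pathSection_relations (K := K)
  suffices colonSection K ≤ (pathSection K).colon {X 0 * X 4 - X 1 * X 3} by
    simpa [Submodule.mem_colon_singleton] using this hh
  refine Ideal.span_le.2 fun p hp => ?_
  rw [SetLike.mem_coe, Submodule.mem_colon_singleton, smul_eq_mul,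
    ← Ideal.Quotient.eq_zero_iff_mem]
  simp only [Set.mem_insert_iff, Set.mem_singleton_iff] at hp
  rcases hp with rfl | rfl | rfl | rfl | rfl | rfl | rfl | rfl | rfl | rfl <;>
  · simp only [map_mul, map_sub]
    grind

lemma normalForm_eq_zero {c : Fin 12 → K}
    (h : normalForm c * (X 0 * X 4 - X 1 * X 3) ∈ pathSection K) : c = 0 := by
  have key : ∀ m, coeff (expVec 1 0 1 0 1) (normalForm c * m) +
      coeff (expVec 0 2 0 0 1) (normalForm c * m) +
      coeff (expVec 1 0 0 2 0) (normalForm c * m) = 0 := by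
    intro m
    rw [← neg_eq_zero, ← socleFunctional_mul, mul_right_comm, mul_comm]
    exact socleFunctional_mul_eq_zero h m
  have e₀ := key (monom K 1 0 1 0 1)
  have e₁ := key (monom K 0 0 1 0 1)
  have e₂ := key (monom K 0 1 0 0 1)
  have e₃ := key (monom K 1 0 0 0 1)
  have e₄ := key (monom K 1 0 0 1 0)
  have e₅ := key (monom K 1 0 1 0 0)
  have e₆ := key (monom K 0 0 1 0 0)
  have e₇ := key (monom K 0 0 0 0 1)
  have e₈ := key (monom K 1 0 0 0 0)
  have e₉ := key (monom K 0 1 0 0 0)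
  have e₁₀ := key (monom K 0 0 0 1 0)
  have e₁₁ := key (monom K 0 0 0 0 0)
  simp only [coeff_mul_monom] at e₀ e₁ e₂ e₃ e₄ e₅ e₆ e₇ e₈ e₉ e₁₀ e₁₁
  simp only [normalForm, coeff_add, coeff_C_mul_monom]
    at e₀ e₁ e₂ e₃ e₄ e₅ e₆ e₇ e₈ e₉ e₁₀ e₁₁
  norm_num at e₀ e₁ e₂ e₃ e₄ e₅ e₆ e₇ e₈ e₉ e₁₀ e₁₁
  ext i
  fin_cases i <;> assumption

lemma mem_colonSection {h : MvPolynomial (Fin 5) K}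
    (hh : h * (X 0 * X 4 - X 1 * X 3) ∈ pathSection K) : h ∈ colonSection K := by
  obtain ⟨c, hc⟩ := exists_sub_normalForm_mem h
  have hN : normalForm c * (X 0 * X 4 - X 1 * X 3) ∈ pathSection K := by
    have := sub_mem hh (mul_mem_pathSection hc)
    rwa [← sub_mul, sub_sub_cancel] at this
  rw [normalForm_eq_zero hN] at hc
  simpa [normalForm] using hc

end FiveVariables

section SixVertices

variable {K V : Type*} [Field K]

/-- The pair of variables attached to a vertex. -/
def xyPair (K : Type*) [Field K] {V : Type*} (v : V) :
    MvPolynomial (V ⊕ V) K × MvPolynomial (V ⊕ V) K :=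
  (X (Sum.inl v), X (Sum.inr v))

/-- The pair of variables attached to a vertex, in reversed order. -/
def yxPair (K : Type*) [Field K] {V : Type*} (v : V) :
    MvPolynomial (V ⊕ V) K × MvPolynomial (V ⊕ V) K :=
  (X (Sum.inr v), X (Sum.inl v))

lemma isLinearPairs_map_xyPair (T : List V) : IsLinearPairs (T.map (xyPair K)) := by
  intro w hw
  obtain ⟨v, -, rfl⟩ := List.mem_map.1 hw
  exact ⟨isHomogeneous_X _ _, isHomogeneous_X _ _⟩

lemma isLinearPairs_map_yxPair (T : List V) : IsLinearPairs (T.map (yxPair K)) := by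
  intro w hw
  obtain ⟨v, -, rfl⟩ := List.mem_map.1 hw
  exact ⟨isHomogeneous_X _ _, isHomogeneous_X _ _⟩

lemma mem_entries_map_xyPair {T : List V} {p : MvPolynomial (V ⊕ V) K} :
    p ∈ entries (T.map (xyPair K)) ↔ ∃ v ∈ T, p = X (Sum.inl v) ∨ p = X (Sum.inr v) := by
  simp [entries, xyPair]

lemma isRegularModulo_entries {T : List V} (hT : T.Nodup) :
    IsRegularModulo ⊥ (entries (T.map (xyPair K))) := by
  have h := isRegularModulo_map_X (K := K) (∅ : Set (V ⊕ V))
    (L := T.flatMap fun v => [Sum.inl v, Sum.inr v]) (by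
      rw [List.nodup_flatMap]
      refine ⟨by simp, hT.imp fun {a b} hab => ?_⟩
      simp [Function.onFun, hab.symm]) (by simp)
  have heq : entries (T.map (xyPair K)) =
      (T.flatMap fun v => [Sum.inl v, Sum.inr v]).map X := by
    simp [entries, List.map_flatMap, List.flatMap_map, xyPair]
  rw [heq]
  simpa using h

/-- The vertices `m₁, …, m₅`. -/
def innerVertices (m : Fin 6 → V) : List V := [m 1, m 2, m 3, m 4, m 5]

/-- The minors of the edges of the path `m₀, …, m₅`. -/
def pathMinors (K : Type*) [Field K] (m : Fin 6 → V) : List (MvPolynomial (V ⊕ V) K) :=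
  chainMinors (X (Sum.inl (m 0))) (X (Sum.inr (m 0))) ((innerVertices m).map (xyPair K))

/-- The linear forms cutting down the path `m₀, …, m₅` to dimension zero. -/
def pathParams (K : Type*) [Field K] (m : Fin 6 → V) : List (MvPolynomial (V ⊕ V) K) :=
  chainParams (X (Sum.inr (m 0))) ((innerVertices m).map (xyPair K)) ++ [X (Sum.inl (m 0))]

/-- The minor of the edge `m₁ m₄`. -/
def chordMinor (K : Type*) [Field K] (m : Fin 6 → V) : MvPolynomial (V ⊕ V) K :=
  X (Sum.inl (m 1)) * X (Sum.inr (m 4)) - X (Sum.inr (m 1)) * X (Sum.inl (m 4))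

/-- The ideal quotient of the path ideal by the minor of `m₁ m₄`. -/
def pathColon (K : Type*) [Field K] (m : Fin 6 → V) : Ideal (MvPolynomial (V ⊕ V) K) :=
  Ideal.ofList (pathMinors K m) ⊔ Ideal.span
    {X (Sum.inl (m 2)) * X (Sum.inl (m 3)), X (Sum.inl (m 2)) * X (Sum.inr (m 3)),
      X (Sum.inr (m 2)) * X (Sum.inl (m 3)), X (Sum.inr (m 2)) * X (Sum.inr (m 3)),
      X (Sum.inl (m 0)) * X (Sum.inr (m 2)) - X (Sum.inr (m 0)) * X (Sum.inl (m 2)),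
      X (Sum.inl (m 3)) * X (Sum.inr (m 5)) - X (Sum.inr (m 3)) * X (Sum.inl (m 5))}

lemma isPosHomogeneous_pathMinors (m : Fin 6 → V) :
    ∀ p ∈ pathMinors K m, IsPosHomogeneous p :=
  (isLinearPairs_map_xyPair _).chainMinors (isHomogeneous_X _ _) (isHomogeneous_X _ _)

lemma isPosHomogeneous_pathParams (m : Fin 6 → V) :
    ∀ p ∈ pathParams K m, IsPosHomogeneous p := by
  rw [pathParams, List.forall_mem_append]
  exact ⟨(isLinearPairs_map_xyPair _).chainParams (isHomogeneous_X _ _),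
    by simpa using isPosHomogeneous_of_linear (isHomogeneous_X _ _)⟩

lemma isPosHomogeneous_chordMinor (m : Fin 6 → V) : IsPosHomogeneous (chordMinor K m) :=
  isPosHomogeneous_minor (isHomogeneous_X _ _) (isHomogeneous_X _ _) (isHomogeneous_X _ _)
    (isHomogeneous_X _ _)

lemma isGradedIdeal_pathColon (m : Fin 6 → V) : IsGradedIdeal (pathColon K m) := by
  refine (isGradedIdeal_ofList (isPosHomogeneous_pathMinors m)).sup (isGradedIdeal_span ?_)
  intro p hp
  have hX (i : V ⊕ V) : (X i : MvPolynomial (V ⊕ V) K).IsHomogeneous 1 := isHomogeneous_X _ _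
  simp only [Set.mem_insert_iff, Set.mem_singleton_iff] at hp
  rcases hp with rfl | rfl | rfl | rfl | rfl | rfl
  · exact ⟨1, (hX _).mul (hX _)⟩
  · exact ⟨1, (hX _).mul (hX _)⟩
  · exact ⟨1, (hX _).mul (hX _)⟩
  · exact ⟨1, (hX _).mul (hX _)⟩
  · exact isPosHomogeneous_minor (hX _) (hX _) (hX _) (hX _)
  · exact isPosHomogeneous_minor (hX _) (hX _) (hX _) (hX _)

lemma pathMinors_eq_zero {I : Ideal (MvPolynomial (V ⊕ V) K)} (m : Fin 6 → V)
    (hI : Ideal.ofList (pathMinors K m) ≤ I) {k l : Fin 6} (hkl : (k : ℕ) + 1 = l) :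
    Ideal.Quotient.mk I (X (Sum.inl (m k))) * Ideal.Quotient.mk I (X (Sum.inr (m l))) =
      Ideal.Quotient.mk I (X (Sum.inr (m k))) * Ideal.Quotient.mk I (X (Sum.inl (m l))) := by
  rw [← map_mul, ← map_mul, Ideal.Quotient.mk_eq_mk_iff_sub_mem]
  refine hI (Ideal.subset_span ?_)
  fin_cases k <;> fin_cases l <;> simp at hkl <;>
    simp [pathMinors, innerVertices, chainMinors, xyPair]

lemma chord_relations {A : Type*} [CommRing A] (x y : Fin 6 → A)
    (h : ∀ k l : Fin 6, (k : ℕ) + 1 = l → x k * y l = y k * x l) :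
    x 2 * x 3 * (x 1 * y 4 - y 1 * x 4) = 0 ∧ x 2 * y 3 * (x 1 * y 4 - y 1 * x 4) = 0 ∧
    y 2 * x 3 * (x 1 * y 4 - y 1 * x 4) = 0 ∧ y 2 * y 3 * (x 1 * y 4 - y 1 * x 4) = 0 ∧
    (x 0 * y 2 - y 0 * x 2) * (x 1 * y 4 - y 1 * x 4) = 0 ∧
    (x 3 * y 5 - y 3 * x 5) * (x 1 * y 4 - y 1 * x 4) = 0 := by
  have h₀ := h 0 1 rfl
  have h₁ := h 1 2 rfl
  have h₂ := h 2 3 rfl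
  have h₃ := h 3 4 rfl
  have h₄ := h 4 5 rfl
  refine ⟨?_, ?_, ?_, ?_, ?_, ?_⟩
  · linear_combination x 1 * x 2 * h₃ + x 1 * x 4 * h₂ + x 3 * x 4 * h₁
  · linear_combination x 1 * y 4 * h₂ + x 3 * y 4 * h₁ + y 1 * x 2 * h₃
  · linear_combination x 3 * y 4 * h₁ + y 1 * x 2 * h₃ + y 1 * x 4 * h₂
  · linear_combination y 3 * y 4 * h₁ + y 1 * y 4 * h₂ + y 1 * y 2 * h₃
  · linear_combination y 4 * (x 0 * h₁ + x 2 * h₀) - x 4 * (y 2 * h₀ + y 0 * h₁)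
  · linear_combination x 1 * (y 5 * h₃ + y 3 * h₄) - y 1 * (x 3 * h₄ + x 5 * h₃)

lemma mul_chordMinor_mem (m : Fin 6 → V) {g : MvPolynomial (V ⊕ V) K} (hg : g ∈ pathColon K m) :
    g * chordMinor K m ∈ Ideal.ofList (pathMinors K m) := by
  set I := Ideal.ofList (pathMinors K m) with hI
  suffices pathColon K m ≤ I.colon {chordMinor K m} by
    simpa [Submodule.mem_colon_singleton] using this hg
  refine sup_le (fun p hp => ?_) (Ideal.span_le.2 fun p hp => ?_)
  · rw [Submodule.mem_colon_singleton]
    exact Ideal.mul_mem_right _ _ hp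
  obtain ⟨h₁, h₂, h₃, h₄, h₅, h₆⟩ := chord_relations
    (fun k => Ideal.Quotient.mk I (X (Sum.inl (m k))))
    (fun k => Ideal.Quotient.mk I (X (Sum.inr (m k)))) fun _ _ => pathMinors_eq_zero m hI.ge
  rw [SetLike.mem_coe, Submodule.mem_colon_singleton, smul_eq_mul,
    ← Ideal.Quotient.eq_zero_iff_mem, chordMinor]
  simp only [Set.mem_insert_iff, Set.mem_singleton_iff] at hp
  rcases hp with rfl | rfl | rfl | rfl | rfl | rfl <;> simp only [map_mul, map_sub] <;> assumption

/-- The projection onto five variables given by the linear forms in `pathParams`. -/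
def sectionHom (K : Type*) [Field K] (m : Fin 6 → V) :
    MvPolynomial (V ⊕ V) K →ₐ[K] MvPolynomial (Fin 5) K :=
  aeval (Sum.elim (Function.extend m ![0, X 0, X 1, X 2, X 3, X 4] 0)
    (Function.extend m ![X 0, X 1, X 2, X 3, X 4, 0] 0))

lemma sectionHom_X_inl {m : Fin 6 → V} (hm : Function.Injective m) (k : Fin 6) :
    sectionHom K m (X (Sum.inl (m k))) =
      (![0, X 0, X 1, X 2, X 3, X 4] : Fin 6 → MvPolynomial (Fin 5) K) k := by
  simp [sectionHom, hm.extend_apply]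

lemma sectionHom_X_inr {m : Fin 6 → V} (hm : Function.Injective m) (k : Fin 6) :
    sectionHom K m (X (Sum.inr (m k))) =
      (![X 0, X 1, X 2, X 3, X 4, 0] : Fin 6 → MvPolynomial (Fin 5) K) k := by
  simp [sectionHom, hm.extend_apply]

lemma sectionHom_X_of_notMem {m : Fin 6 → V} {v : V} (hv : v ∉ Set.range m) :
    sectionHom K m (X (Sum.inl v)) = 0 ∧ sectionHom K m (X (Sum.inr v)) = 0 := by
  have : ¬ ∃ a, m a = v := hv
  simp [sectionHom, Function.extend_apply' _ _ _ this]

lemma sup_le_comap_pathSection {m : Fin 6 → V} (hm : Function.Injective m) {T : List V}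
    (hT : ∀ v ∈ T, v ∉ Set.range m) :
    Ideal.ofList (pathMinors K m) ⊔
      Ideal.ofList (pathParams K m ++ entries (T.map (xyPair K))) ≤
        (pathSection K).comap (sectionHom K m) := by
  refine sup_le (Ideal.span_le.2 fun p hp => ?_) (Ideal.span_le.2 fun p hp => ?_)
  · have hneg {a b : MvPolynomial (Fin 5) K} (h : b ∈ pathSection K) (hab : a + b = 0) :
        a ∈ pathSection K := by
      rw [eq_neg_of_add_eq_zero_left hab]
      exact neg_mem h
    simp only [pathMinors, innerVertices, chainMinors, xyPair, List.map_cons, List.map_nil,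
      Set.mem_ofPred_eq, List.mem_cons, List.not_mem_nil, or_false] at hp
    rw [SetLike.mem_coe, Ideal.mem_comap]
    rcases hp with rfl | rfl | rfl | rfl | rfl <;>
      simp only [map_mul, map_sub, sectionHom_X_inl hm, sectionHom_X_inr hm]
    · exact hneg (b := X 0 * X 0) (Ideal.subset_span (by simp)) (by simp)
    · exact hneg (b := X 1 * X 1 - X 0 * X 2) (Ideal.subset_span (by simp)) (by simp)
    · exact hneg (b := X 2 * X 2 - X 1 * X 3) (Ideal.subset_span (by simp)) (by simp)
    · exact hneg (b := X 3 * X 3 - X 2 * X 4) (Ideal.subset_span (by simp)) (by simp)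
    · exact hneg (b := X 4 * X 4) (Ideal.subset_span (by simp)) (by simp)
  · rw [SetLike.mem_coe, Ideal.mem_comap]
    suffices sectionHom K m p = 0 by simp [this]
    rcases List.mem_append.1 hp with hp | hp
    · simp only [pathParams, innerVertices, chainParams, xyPair, List.map_cons, List.map_nil,
        List.mem_append, List.mem_cons, List.not_mem_nil, or_false] at hp
      rcases hp with (rfl | rfl | rfl | rfl | rfl | rfl) | rfl <;>
        simp [sectionHom_X_inl hm, sectionHom_X_inr hm]
    · obtain ⟨v, hv, rfl | rfl⟩ := mem_entries_map_xyPair.1 hp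
      exacts [(sectionHom_X_of_notMem (hT v hv)).1, (sectionHom_X_of_notMem (hT v hv)).2]

lemma mem_pathColon_sup {m : Fin 6 → V} (hm : Function.Injective m) {T : List V}
    (hT : ∀ v, v ∈ T ↔ v ∉ Set.range m) {g : MvPolynomial (V ⊕ V) K}
    (hg : g * chordMinor K m ∈ Ideal.ofList (pathMinors K m) ⊔
      Ideal.ofList (pathParams K m ++ entries (T.map (xyPair K)))) :
    g ∈ pathColon K m ⊔ Ideal.ofList (pathParams K m ++ entries (T.map (xyPair K))) := by
  set Λ := pathParams K m ++ entries (T.map (xyPair K)) with hΛ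
  set I := pathColon K m ⊔ Ideal.ofList Λ with hI
  have hcolon : sectionHom K m g ∈ colonSection K := by
    have := sup_le_comap_pathSection hm (fun v hv => (hT v).1 hv) hg
    rw [Ideal.mem_comap, map_mul] at this
    refine mem_colonSection ?_
    simpa [chordMinor, sectionHom_X_inl hm, sectionHom_X_inr hm] using this
  have hle : Ideal.ofList (pathMinors K m) ≤ I := le_sup_left.trans le_sup_left
  have hpar : ∀ p ∈ Λ, Ideal.Quotient.mk I p = 0 := fun p hp =>
    Ideal.Quotient.eq_zero_iff_mem.2 (Ideal.mem_sup_right (Ideal.subset_span hp))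
  have hx : ∀ k l : Fin 6, (k : ℕ) + 1 = l → Ideal.Quotient.mk I (X (Sum.inl (m l))) =
      Ideal.Quotient.mk I (X (Sum.inr (m k))) := by
    intro k l hkl
    rw [← sub_eq_zero, ← map_sub]
    refine hpar _ (List.mem_append_left _ (List.mem_append_left _ ?_))
    fin_cases k <;> fin_cases l <;> simp at hkl <;> simp [innerVertices, chainParams, xyPair]
  have hx₀ : Ideal.Quotient.mk I (X (Sum.inl (m 0))) = 0 :=
    hpar _ (List.mem_append_left _ (List.mem_append_right _ (by simp)))
  have hy₅ : Ideal.Quotient.mk I (X (Sum.inr (m 5))) = 0 :=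
    hpar _ (List.mem_append_left _ (List.mem_append_left _
      (by simp [innerVertices, chainParams, xyPair])))
  let ι : MvPolynomial (Fin 5) K →ₐ[K] MvPolynomial (V ⊕ V) K :=
    aeval fun k => X (Sum.inr (m k.castSucc))
  have hι : ∀ k, ι (X k) = X (Sum.inr (m k.castSucc)) := fun k => aeval_X _ _
  have hretract : ((Ideal.Quotient.mkₐ K I).comp ι).comp (sectionHom K m) =
      Ideal.Quotient.mkₐ K I := by
    refine MvPolynomial.algHom_ext fun i => ?_
    by_cases hv : Sum.elim id id i ∈ Set.range m
    · obtain ⟨k, hk⟩ := hv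
      rcases i with v | v <;> obtain rfl : m k = v := hk <;>
        simp only [AlgHom.comp_apply, sectionHom_X_inl hm, sectionHom_X_inr hm,
          Ideal.Quotient.mkₐ_eq_mk]
      · fin_cases k
        · simp [hx₀]
        · simpa [hι] using (hx 0 1 rfl).symm
        · simpa [hι] using (hx 1 2 rfl).symm
        · simpa [hι] using (hx 2 3 rfl).symm
        · simpa [hι] using (hx 3 4 rfl).symm
        · simpa [hι] using (hx 4 5 rfl).symm
      · fin_cases k <;> simp [hι, hy₅]
    · have hmem : ∀ p ∈ entries (T.map (xyPair K)), Ideal.Quotient.mk I p = 0 :=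
        fun p hp => hpar _ (List.mem_append_right _ hp)
      rcases i with v | v
      · rw [AlgHom.comp_apply, (sectionHom_X_of_notMem (v := v) hv).1, map_zero]
        exact (hmem _ (mem_entries_map_xyPair.2 ⟨v, (hT v).2 hv, Or.inl rfl⟩)).symm
      · rw [AlgHom.comp_apply, (sectionHom_X_of_notMem (v := v) hv).2, map_zero]
        exact (hmem _ (mem_entries_map_xyPair.2 ⟨v, (hT v).2 hv, Or.inr rfl⟩)).symm
  have hmap : colonSection K ≤ I.comap ι := by
    have hz : ∀ p ∈ ({X (Sum.inl (m 2)) * X (Sum.inl (m 3)),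
        X (Sum.inl (m 2)) * X (Sum.inr (m 3)), X (Sum.inr (m 2)) * X (Sum.inl (m 3)),
        X (Sum.inr (m 2)) * X (Sum.inr (m 3)),
        X (Sum.inl (m 0)) * X (Sum.inr (m 2)) - X (Sum.inr (m 0)) * X (Sum.inl (m 2)),
        X (Sum.inl (m 3)) * X (Sum.inr (m 5)) - X (Sum.inr (m 3)) * X (Sum.inl (m 5))} :
          Set (MvPolynomial (V ⊕ V) K)), Ideal.Quotient.mk I p = 0 := fun p hp =>
      Ideal.Quotient.eq_zero_iff_mem.2
        (Ideal.mem_sup_left (Ideal.mem_sup_right (Ideal.subset_span hp)))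
    simp only [Set.forall_mem_insert, Set.mem_singleton_iff, forall_eq, map_mul, map_sub] at hz
    obtain ⟨z₁, z₂, z₃, z₄, z₅, z₆⟩ := hz
    have h₀ := pathMinors_eq_zero m hle (k := 0) (l := 1) rfl
    have h₁ := pathMinors_eq_zero m hle (k := 1) (l := 2) rfl
    have h₃ := pathMinors_eq_zero m hle (k := 3) (l := 4) rfl
    have h₄ := pathMinors_eq_zero m hle (k := 4) (l := 5) rfl
    have x₁ := hx 0 1 rfl
    have x₂ := hx 1 2 rfl
    have x₃ := hx 2 3 rfl
    have x₄ := hx 3 4 rfl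
    have x₅ := hx 4 5 rfl
    simp only [x₁, x₂, x₃, x₄, x₅, hx₀, hy₅, zero_mul, mul_zero, zero_sub, neg_eq_zero]
      at z₁ z₂ z₃ z₄ z₅ z₆ h₀ h₁ h₃ h₄
    refine Ideal.span_le.2 fun p hp => ?_
    rw [SetLike.mem_coe, Ideal.mem_comap, ← Ideal.Quotient.eq_zero_iff_mem]
    simp only [Set.mem_insert_iff, Set.mem_singleton_iff] at hp
    rcases hp with rfl | rfl | rfl | rfl | rfl | rfl | rfl | rfl | rfl | rfl <;>
      simp only [map_mul, map_sub, hι]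
    exacts [h₀.symm, h₄.symm, sub_eq_zero.2 h₁.symm, z₃, sub_eq_zero.2 h₃.symm, z₁, z₂, z₄, z₅, z₆]
  have hfin := congrArg (fun φ => φ g) hretract
  simp only [AlgHom.comp_apply, Ideal.Quotient.mkₐ_eq_mk] at hfin
  rw [← Ideal.Quotient.eq_zero_iff_mem, ← hfin, Ideal.Quotient.eq_zero_iff_mem]
  exact hmap hcolon

end SixVertices

section CohenMacaulay

variable {K σ : Type*} [Field K]

lemma mem_span_range_X {p : MvPolynomial σ K} (hp : constantCoeff p = 0) :
    p ∈ Ideal.span (Set.range (X : σ → MvPolynomial σ K)) := by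
  rw [← Set.image_univ, mem_ideal_span_X_image]
  intro d hd
  have hd0 : d ≠ 0 := by
    rintro rfl
    exact mem_support_iff.1 hd hp
  obtain ⟨i, hi⟩ := Finsupp.ne_iff.1 hd0
  exact ⟨i, trivial, hi⟩

lemma ofList_le_ker_constantCoeff {L : List (MvPolynomial σ K)}
    (hL : ∀ p ∈ L, IsPosHomogeneous p) :
    Ideal.ofList L ≤ RingHom.ker (constantCoeff (σ := σ) (R := K)) :=
  Ideal.span_le.2 fun p hp => (hL p hp).constantCoeff

lemma isCMQuot_of_isRegularModulo {J : Ideal (MvPolynomial σ K)} {L : List (MvPolynomial σ K)}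
    (hJ : J ≤ RingHom.ker (constantCoeff (σ := σ) (R := K)))
    (hL : ∀ p ∈ L, IsPosHomogeneous p) (h : IsRegularModulo J L)
    (hdim : ringKrullDim (MvPolynomial σ K ⧸ J) ≤ (L.length : WithBot ℕ∞)) : IsCMQuot J := by
  have hreg : RingTheory.Sequence.IsRegular (MvPolynomial σ K ⧸ J)
      (L.map (Ideal.Quotient.mk J)) := by
    refine ⟨(isWeaklyRegular_map_mk_iff J L).2 h, fun htop => ?_⟩
    rw [smul_eq_mul, Ideal.mul_top, ← Ideal.map_ofList] at htop
    have hone : Ideal.Quotient.mk J 1 ∈ (Ideal.ofList L).map (Ideal.Quotient.mk J) := by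
      rw [← htop]
      trivial
    rw [mk_mem_map_iff_mem_sup] at hone
    have := sup_le hJ (ofList_le_ker_constantCoeff hL) hone
    simp [RingHom.mem_ker] at this
  have hlen : ((L.length : ℕ∞) : WithBot ℕ∞) ≤ ringKrullDim (MvPolynomial σ K ⧸ J) := by
    simpa using length_le_ringKrullDim_of_isRegular hreg
  refine le_antisymm (le_trans (WithBot.coe_le_coe.2 (sSup_le ?_)) hlen)
    (hdim.trans (WithBot.coe_le_coe.2 (le_sSup ?_)))
  · rintro d ⟨l, rfl, -, hl⟩
    have := (length_le_ringKrullDim_of_isRegular hl).trans hdim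
    exact_mod_cast this
  · refine ⟨L.map (Ideal.Quotient.mk J), by simp, ?_, hreg⟩
    simp only [List.mem_map, forall_exists_index, and_imp, forall_apply_eq_imp_iff₂]
    exact fun p hp => Ideal.mem_map_of_mem _ (mem_span_range_X (hL p hp).constantCoeff)

lemma IsRegularModulo.ringKrullDim_le [Finite σ] {J : Ideal (MvPolynomial σ K)}
    {M : List (MvPolynomial σ K)} (h : IsRegularModulo ⊥ M) (hM : Ideal.ofList M ≤ J) {d : ℕ}
    (hd : Nat.card σ ≤ d + M.length) :
    ringKrullDim (MvPolynomial σ K ⧸ J) ≤ (d : WithBot ℕ∞) := by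
  have h₁ := h.ringKrullDim_add_length_le
  have h₂ : ringKrullDim (MvPolynomial σ K ⧸ J) ≤
      ringKrullDim (MvPolynomial σ K ⧸ (⊥ ⊔ Ideal.ofList M)) :=
    ringKrullDim_le_of_surjective (Ideal.Quotient.factor (by simpa using hM))
      (Ideal.Quotient.factor_surjective _)
  have h₃ : ringKrullDim (MvPolynomial σ K ⧸ (⊥ : Ideal (MvPolynomial σ K))) = Nat.card σ := by
    rw [ringKrullDim_eq_of_ringEquiv (RingEquiv.quotientBot _),
      MvPolynomial.ringKrullDim_of_isNoetherianRing, ringKrullDim_eq_zero_of_field, zero_add]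
  have h₄ : ringKrullDim (MvPolynomial σ K ⧸ J) + (M.length : ℕ) ≤ (d + M.length : ℕ) :=
    calc _ ≤ _ := add_le_add_left h₂ _
      _ ≤ _ := h₁
      _ = _ := h₃
      _ ≤ _ := by exact_mod_cast hd
  generalize ringKrullDim (MvPolynomial σ K ⧸ J) = e at h₄
  induction e with
  | bot => exact bot_le
  | coe e =>
    have : e + (M.length : ℕ∞) ≤ (d : ℕ∞) + M.length := by exact_mod_cast h₄
    exact_mod_cast (ENat.add_le_add_iff_right (ENat.natCast_ne_top _)).1 this

end CohenMacaulay

section Tails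

variable {K V : Type*} [Field K]

/-- The differences `x_{k+1} - y_k` along the path `m₀, …, m₅`. -/
def innerParams (K : Type*) [Field K] (m : Fin 6 → V) : List (MvPolynomial (V ⊕ V) K) :=
  [X (Sum.inl (m 1)) - X (Sum.inr (m 0)), X (Sum.inl (m 2)) - X (Sum.inr (m 1)),
    X (Sum.inl (m 3)) - X (Sum.inr (m 2)), X (Sum.inl (m 4)) - X (Sum.inr (m 3)),
    X (Sum.inl (m 5)) - X (Sum.inr (m 4))]

lemma pathParams_eq (m : Fin 6 → V) :
    pathParams K m = innerParams K m ++ [X (Sum.inr (m 5)), X (Sum.inl (m 0))] := rfl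

/-- The minors of the edges of the path starting in `m₀` and continuing along `TL`. -/
def leftMinors (K : Type*) [Field K] (m : Fin 6 → V) (TL : List V) :
    List (MvPolynomial (V ⊕ V) K) :=
  chainMinors (X (Sum.inr (m 0))) (X (Sum.inl (m 0))) (TL.map (yxPair K))

/-- The minors of the edges of the path starting in `m₅` and continuing along `TR`. -/
def rightMinors (K : Type*) [Field K] (m : Fin 6 → V) (TR : List V) :
    List (MvPolynomial (V ⊕ V) K) :=
  chainMinors (X (Sum.inl (m 5))) (X (Sum.inr (m 5))) (TR.map (xyPair K))

/-- A linear system of parameters for the path `m₀, …, m₅` with two tails attached. -/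
def tailParams (K : Type*) [Field K] (m : Fin 6 → V) (TL TR : List V) :
    List (MvPolynomial (V ⊕ V) K) :=
  innerParams K m ++ (chainParams (X (Sum.inl (m 0))) (TL.map (yxPair K)) ++
    chainParams (X (Sum.inr (m 5))) (TR.map (xyPair K)))

/-- The binomial edge ideal of the path `m₀, …, m₅` with the extra edge `m₁ m₄` and the paths
`TL` and `TR` attached to `m₀` and `m₅`. -/
def tailedPathIdeal (K : Type*) [Field K] (m : Fin 6 → V) (TL TR : List V) :
    Ideal (MvPolynomial (V ⊕ V) K) :=
  Ideal.ofList (pathMinors K m) ⊔ Ideal.span {chordMinor K m} ⊔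
    Ideal.ofList (leftMinors K m TL ++ rightMinors K m TR)

lemma isPosHomogeneous_leftMinors (m : Fin 6 → V) (TL : List V) :
    ∀ p ∈ leftMinors K m TL, IsPosHomogeneous p :=
  (isLinearPairs_map_yxPair _).chainMinors (isHomogeneous_X _ _) (isHomogeneous_X _ _)

lemma isPosHomogeneous_rightMinors (m : Fin 6 → V) (TR : List V) :
    ∀ p ∈ rightMinors K m TR, IsPosHomogeneous p :=
  (isLinearPairs_map_xyPair _).chainMinors (isHomogeneous_X _ _) (isHomogeneous_X _ _)

lemma isPosHomogeneous_innerParams (m : Fin 6 → V) :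
    ∀ p ∈ innerParams K m, IsPosHomogeneous p := fun p hp =>
  isPosHomogeneous_pathParams m p (pathParams_eq (K := K) m ▸ List.mem_append_left _ hp)

lemma isPosHomogeneous_tailParams (m : Fin 6 → V) (TL TR : List V) :
    ∀ p ∈ tailParams K m TL TR, IsPosHomogeneous p := by
  simp only [tailParams, List.forall_mem_append]
  exact ⟨isPosHomogeneous_innerParams m,
    (isLinearPairs_map_yxPair _).chainParams (isHomogeneous_X _ _),
    (isLinearPairs_map_xyPair _).chainParams (isHomogeneous_X _ _)⟩

lemma entries_yxPair_perm (T : List V) :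
    (entries (T.map (yxPair K))).Perm (entries (T.map (xyPair K))) := by
  induction T with
  | nil => rfl
  | cons v T ih => exact (List.Perm.swap _ _ _).trans ((ih.cons _).cons _)

lemma entries_append {A : Type*} (t₁ t₂ : List (A × A)) :
    entries (t₁ ++ t₂) = entries t₁ ++ entries t₂ := by
  simp [entries]

variable [Finite V]

lemma IsRegularModulo.attach_tails {I : Ideal (MvPolynomial (V ⊕ V) K)} (hI : IsGradedIdeal I)
    {m : Fin 6 → V} {TL TR : List V}
    (h : IsRegularModulo I (pathParams K m ++ entries ((TL ++ TR).map (xyPair K)))) :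
    IsRegularModulo I ((leftMinors K m TL ++ rightMinors K m TR) ++ tailParams K m TL TR) := by
  have hX (i : V ⊕ V) : (X i : MvPolynomial (V ⊕ V) K).IsHomogeneous 1 := isHomogeneous_X _ _
  have hX' (i : V ⊕ V) := isPosHomogeneous_of_linear (hX i)
  have hL := isLinearPairs_map_yxPair (K := K) TL
  have hR := isLinearPairs_map_xyPair (K := K) TR
  have hin := isPosHomogeneous_innerParams (K := K) m
  have hperm : (entries (TL.map (yxPair K)) : Multiset (MvPolynomial (V ⊕ V) K)) =
      (entries (TL.map (xyPair K)) : Multiset (MvPolynomial (V ⊕ V) K)) :=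
    Multiset.coe_eq_coe.2 (entries_yxPair_perm TL)
  have h₁ : IsRegularModulo I (X (Sum.inr (m 5)) :: entries (TR.map (xyPair K)) ++
      (innerParams K m ++ X (Sum.inl (m 0)) :: entries (TL.map (yxPair K)))) := by
    refine h.perm hI ?_ ?_
    · rw [List.forall_mem_append]
      exact ⟨isPosHomogeneous_pathParams m, (isLinearPairs_map_xyPair _).entries⟩
    · simp only [pathParams_eq, List.map_append, entries_append, ← Multiset.coe_eq_coe,
        ← Multiset.cons_coe, ← Multiset.coe_add, ← Multiset.singleton_add, hperm,
        Multiset.coe_nil]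
      abel
  have h₂ := IsRegularModulo.attach_chain hI hR (hX (Sum.inl (m 5))) (hX (Sum.inr (m 5))) (by
    simp only [List.forall_mem_append, List.forall_mem_cons]
    exact ⟨hin, hX' _, hL.entries⟩) h₁
  have h₃ : IsRegularModulo I (X (Sum.inl (m 0)) :: entries (TL.map (yxPair K)) ++
      (rightMinors K m TR ++ (innerParams K m ++
        chainParams (X (Sum.inr (m 5))) (TR.map (xyPair K))))) := by
    refine h₂.perm hI ?_ ?_
    · simp only [List.forall_mem_append, List.forall_mem_cons]
      exact ⟨isPosHomogeneous_rightMinors m TR, hR.chainParams (hX _), hin, hX' _, hL.entries⟩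
    · simp only [rightMinors, ← Multiset.coe_eq_coe, ← Multiset.cons_coe, ← Multiset.coe_add,
        ← Multiset.singleton_add]
      abel
  have h₄ := IsRegularModulo.attach_chain hI hL (hX (Sum.inr (m 0))) (hX (Sum.inl (m 0))) (by
    simp only [List.forall_mem_append]
    exact ⟨isPosHomogeneous_rightMinors m TR, hin, hR.chainParams (hX _)⟩) h₃
  refine h₄.perm hI ?_ ?_
  · simp only [List.forall_mem_append]
    exact ⟨isPosHomogeneous_leftMinors m TL, hL.chainParams (hX _),
      isPosHomogeneous_rightMinors m TR, hin, hR.chainParams (hX _)⟩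
  · simp only [leftMinors, tailParams, ← Multiset.coe_eq_coe, ← Multiset.coe_add]
    abel

lemma isRegularModulo_pathMinors {m : Fin 6 → V} {T : List V}
    (hT : (List.ofFn m ++ T).Nodup) :
    IsRegularModulo ⊥ (pathMinors K m ++ (pathParams K m ++ entries (T.map (xyPair K)))) := by
  have hX (i : V ⊕ V) : (X i : MvPolynomial (V ⊕ V) K).IsHomogeneous 1 := isHomogeneous_X _ _
  have h := isRegularModulo_entries (K := K) hT
  have h₁ : IsRegularModulo ⊥ (X (Sum.inr (m 0)) :: entries ((innerVertices m).map (xyPair K)) ++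
      (X (Sum.inl (m 0)) :: entries (T.map (xyPair K)))) := by
    refine h.perm isGradedIdeal_bot (isLinearPairs_map_xyPair _).entries ?_
    have hm : List.ofFn m = m 0 :: innerVertices m := by simp [List.ofFn_succ, innerVertices]
    have hcons : ∀ T : List V, entries ((m 0 :: T).map (xyPair K)) =
        X (Sum.inl (m 0)) :: X (Sum.inr (m 0)) :: entries (T.map (xyPair K)) := fun T => rfl
    rw [hm, List.cons_append, hcons]
    simp only [List.map_append, entries_append, ← Multiset.coe_eq_coe, ← Multiset.cons_coe,
      ← Multiset.coe_add, ← Multiset.singleton_add]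
    abel
  have h₂ := IsRegularModulo.attach_chain isGradedIdeal_bot (isLinearPairs_map_xyPair _)
    (hX (Sum.inl (m 0))) (hX (Sum.inr (m 0))) (by
      simp only [List.forall_mem_cons]
      exact ⟨isPosHomogeneous_of_linear (hX _), (isLinearPairs_map_xyPair _).entries⟩) h₁
  simpa [pathMinors, pathParams] using h₂

/-- The path `m₀, …, m₅` with the extra edge `m₁ m₄` and paths attached to `m₀` and `m₅`
has a Cohen–Macaulay binomial edge ideal. -/
lemma isCMQuot_of_path {m : Fin 6 → V} {TL TR : List V}
    (hnd : (List.ofFn m ++ (TL ++ TR)).Nodup) (hcov : ∀ v, v ∈ List.ofFn m ++ (TL ++ TR)) :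
    IsCMQuot (tailedPathIdeal K m TL TR) := by
  have hreg := isRegularModulo_pathMinors (K := K) hnd
  rw [isRegularModulo_append, bot_sup_eq] at hreg
  obtain ⟨hpath, hpar⟩ := hreg
  have hparams : ∀ p ∈ pathParams K m ++ entries ((TL ++ TR).map (xyPair K)),
      IsPosHomogeneous p := by
    rw [List.forall_mem_append]
    exact ⟨isPosHomogeneous_pathParams m, (isLinearPairs_map_xyPair _).entries⟩
  have hnd' := hnd
  rw [List.nodup_append, List.nodup_ofFn] at hnd'
  obtain ⟨hm, -, hdisj⟩ := hnd'
  have hT : ∀ v, v ∈ TL ++ TR ↔ v ∉ Set.range m := by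
    refine fun v => ⟨fun hv hv' => hdisj v (List.mem_ofFn.2 hv') v hv rfl, fun hv => ?_⟩
    exact (List.mem_append.1 (hcov v)).resolve_left fun h => hv (List.mem_ofFn.1 h)
  have hgr := isGradedIdeal_ofList (isPosHomogeneous_pathMinors (K := K) m)
  have hchord := (hpar.sup_span_singleton_of_colon (isGradedIdeal_pathColon m) hparams
    (fun g hg => mul_chordMinor_mem m hg) (fun g hg => mem_pathColon_sup hm hT hg)).1
  have htails := hchord.attach_tails
    (hgr.sup_span_singleton (isPosHomogeneous_chordMinor m))
  rw [isRegularModulo_append] at htails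
  have hminors : ∀ p ∈ leftMinors K m TL ++ rightMinors K m TR, IsPosHomogeneous p := by
    rw [List.forall_mem_append]
    exact ⟨isPosHomogeneous_leftMinors m TL, isPosHomogeneous_rightMinors m TR⟩
  refine isCMQuot_of_isRegularModulo ?_ (isPosHomogeneous_tailParams m TL TR) htails.2 ?_
  · refine sup_le (sup_le (ofList_le_ker_constantCoeff (isPosHomogeneous_pathMinors m)) ?_)
      (ofList_le_ker_constantCoeff hminors)
    rw [Ideal.span_singleton_le_iff_mem]
    exact (isPosHomogeneous_chordMinor m).constantCoeff
  · have hM : IsRegularModulo ⊥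
        (pathMinors K m ++ (leftMinors K m TL ++ rightMinors K m TR)) := by
      rw [isRegularModulo_append, bot_sup_eq]
      exact ⟨hpath, ((isRegularModulo_append _ _ _).1 (hpar.attach_tails hgr)).1⟩
    refine hM.ringKrullDim_le ?_ ?_
    · rw [Ideal.ofList_append]
      exact sup_le_sup_right le_sup_left _
    · have hcard : Nat.card V = 6 + (TL.length + TR.length) := by
        classical
        have := Nat.card_congr (hnd.getEquivOfForallMemList _ hcov)
        rw [← this, Nat.card_fin]
        simp only [List.length_append, List.length_ofFn]
      simp [tailParams, innerParams, pathMinors, leftMinors, rightMinors, length_chainMinors,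
        length_chainParams, innerVertices, hcard]
      omega

end Tails

section Graph

variable {K : Type*} [Field K]

lemma mem_chainMinors_ofFn {A : Type*} [CommRing A] {a : ℕ} (w : Fin (a + 1) → A × A) {f : A} :
    f ∈ chainMinors (w 0).1 (w 0).2 (List.ofFn fun i : Fin a => w i.succ) ↔
      ∃ i : Fin a, f = (w i.castSucc).1 * (w i.succ).2 - (w i.castSucc).2 * (w i.succ).1 := by
  induction a with
  | zero => simp [chainMinors]
  | succ a ih =>
    rw [List.ofFn_succ, chainMinors, List.mem_cons, ih fun i => w i.succ, Fin.exists_fin_succ]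
    simp

/-- The vertices `u₃, u₂, u₁, v₁, v₂, v₃`. -/
def middleVertices (a b : ℕ) : Fin 6 → Fin (a + 3) ⊕ Fin (b + 3) :=
  ![Sum.inl ⟨2, by omega⟩, Sum.inl ⟨1, by omega⟩, Sum.inl ⟨0, by omega⟩,
    Sum.inr ⟨0, by omega⟩, Sum.inr ⟨1, by omega⟩, Sum.inr ⟨2, by omega⟩]

/-- The vertices `u₃, u₄, …`. -/
def leftVertex (a b : ℕ) (i : Fin (a + 1)) : Fin (a + 3) ⊕ Fin (b + 3) :=
  Sum.inl ⟨i + 2, by omega⟩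

/-- The vertices `v₃, v₄, …`. -/
def rightVertex (a b : ℕ) (i : Fin (b + 1)) : Fin (a + 3) ⊕ Fin (b + 3) :=
  Sum.inr ⟨i + 2, by omega⟩

lemma nodup_vertices (a b : ℕ) : (List.ofFn (middleVertices a b) ++
    (List.ofFn (fun i : Fin a => leftVertex a b i.succ) ++
      List.ofFn (fun i : Fin b => rightVertex a b i.succ))).Nodup := by
  rw [List.nodup_append, List.nodup_append, List.nodup_ofFn, List.nodup_ofFn, List.nodup_ofFn]
  refine ⟨?_, ⟨?_, ?_, ?_⟩, ?_⟩
  · intro i j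
    fin_cases i <;> fin_cases j <;> simp [middleVertices]
  · intro i j h
    simpa [leftVertex, Fin.ext_iff] using h
  · intro i j h
    simpa [rightVertex, Fin.ext_iff] using h
  · intro v hv w hw
    obtain ⟨i, rfl⟩ := List.mem_ofFn.1 hv
    obtain ⟨j, rfl⟩ := List.mem_ofFn.1 hw
    simp [leftVertex, rightVertex]
  · intro v hv w hw
    obtain ⟨i, rfl⟩ := List.mem_ofFn.1 hv
    rcases List.mem_append.1 hw with hw | hw <;> obtain ⟨j, rfl⟩ := List.mem_ofFn.1 hw <;>
      fin_cases i <;> simp [middleVertices, leftVertex, rightVertex]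

lemma mem_vertices (a b : ℕ) (v : Fin (a + 3) ⊕ Fin (b + 3)) :
    v ∈ List.ofFn (middleVertices a b) ++
      (List.ofFn (fun i : Fin a => leftVertex a b i.succ) ++
        List.ofFn (fun i : Fin b => rightVertex a b i.succ)) := by
  rw [List.mem_append, List.mem_append, List.mem_ofFn, List.mem_ofFn, List.mem_ofFn]
  rcases v with ⟨_ | _ | _ | i, hi⟩ | ⟨_ | _ | _ | i, hi⟩
  · exact Or.inl ⟨2, rfl⟩
  · exact Or.inl ⟨1, rfl⟩
  · exact Or.inl ⟨0, rfl⟩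
  · exact Or.inr (Or.inl ⟨⟨i, by omega⟩, rfl⟩)
  · exact Or.inl ⟨3, rfl⟩
  · exact Or.inl ⟨4, rfl⟩
  · exact Or.inl ⟨5, rfl⟩
  · exact Or.inr (Or.inr ⟨⟨i, by omega⟩, rfl⟩)

lemma mem_leftMinors {a b : ℕ} {f : MvPolynomial _ K} :
    f ∈ leftMinors K (middleVertices a b) (List.ofFn fun i : Fin a => leftVertex a b i.succ) ↔
      ∃ i : Fin a, f =
        X (Sum.inr (leftVertex a b i.castSucc)) * X (Sum.inl (leftVertex a b i.succ)) -
        X (Sum.inl (leftVertex a b i.castSucc)) * X (Sum.inr (leftVertex a b i.succ)) := by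
  rw [leftMinors, List.map_ofFn]
  exact mem_chainMinors_ofFn fun i => yxPair K (leftVertex a b i)

lemma mem_rightMinors {a b : ℕ} {f : MvPolynomial _ K} :
    f ∈ rightMinors K (middleVertices a b) (List.ofFn fun i : Fin b => rightVertex a b i.succ) ↔
      ∃ i : Fin b, f =
        X (Sum.inl (rightVertex a b i.castSucc)) * X (Sum.inr (rightVertex a b i.succ)) -
        X (Sum.inr (rightVertex a b i.castSucc)) * X (Sum.inl (rightVertex a b i.succ)) := by
  rw [rightMinors, List.map_ofFn]
  exact mem_chainMinors_ofFn fun i => xyPair K (rightVertex a b i)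

/-- The ideal of the path with tails that describes the binomial edge ideal of `graphG4`. -/
def pathIdealG4 (K : Type*) [Field K] (a b : ℕ) :
    Ideal (MvPolynomial ((Fin (a + 3) ⊕ Fin (b + 3)) ⊕ (Fin (a + 3) ⊕ Fin (b + 3))) K) :=
  tailedPathIdeal K (middleVertices a b) (List.ofFn fun i : Fin a => leftVertex a b i.succ)
    (List.ofFn fun i : Fin b => rightVertex a b i.succ)

lemma pathMinor_mem_pathIdealG4 (a b : ℕ) {k l : Fin 6} (hkl : (k : ℕ) + 1 = l) :
    X (Sum.inl (middleVertices a b k)) * X (Sum.inr (middleVertices a b l)) -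
      X (Sum.inl (middleVertices a b l)) * X (Sum.inr (middleVertices a b k)) ∈
        pathIdealG4 K a b := by
  have := pathMinors_eq_zero (I := pathIdealG4 K a b) (middleVertices a b)
    (le_sup_left.trans le_sup_left) hkl
  rw [← map_mul, ← map_mul, Ideal.Quotient.mk_eq_mk_iff_sub_mem] at this
  rwa [mul_comm (X (Sum.inl (middleVertices a b l)))]

lemma minor_mem_pathIdealG4_symm {a b : ℕ} {v w : Fin (a + 3) ⊕ Fin (b + 3)}
    (h : X (Sum.inl v) * X (Sum.inr w) - X (Sum.inl w) * X (Sum.inr v) ∈ pathIdealG4 K a b) :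
    X (Sum.inl w) * X (Sum.inr v) - X (Sum.inl v) * X (Sum.inr w) ∈ pathIdealG4 K a b := by
  rw [← neg_sub]
  exact neg_mem h

lemma minor_mem_pathIdealG4 {a b : ℕ} {v w : Fin (a + 3) ⊕ Fin (b + 3)}
    (h : g4Rel (a + 3) (b + 3) v w) :
    X (Sum.inl v) * X (Sum.inr w) - X (Sum.inl w) * X (Sum.inr v) ∈ pathIdealG4 K a b := by
  rcases v with ⟨i, hi⟩ | ⟨i, hi⟩ <;> rcases w with ⟨j, hj⟩ | ⟨j, hj⟩
  · obtain rfl : i + 1 = j := h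
    apply minor_mem_pathIdealG4_symm
    rcases i with _ | _ | i
    · exact pathMinor_mem_pathIdealG4 a b (k := 1) (l := 2) rfl
    · exact pathMinor_mem_pathIdealG4 a b (k := 0) (l := 1) rfl
    · refine Ideal.mem_sup_right (Ideal.subset_span (List.mem_append_left _
        (mem_leftMinors.2 ⟨⟨i, by omega⟩, ?_⟩)))
      exact congrArg₂ _ (mul_comm _ _) rfl
  · obtain ⟨rfl, rfl⟩ | ⟨rfl, rfl⟩ : (i = 0 ∧ j = 0) ∨ (i = 1 ∧ j = 1) := h
    · exact pathMinor_mem_pathIdealG4 a b (k := 2) (l := 3) rfl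
    · refine Ideal.mem_sup_left (Ideal.mem_sup_right (Ideal.subset_span ?_))
      exact congrArg₂ _ rfl (mul_comm _ _)
  · exact h.elim
  · obtain rfl : i + 1 = j := h
    rcases i with _ | _ | i
    · exact pathMinor_mem_pathIdealG4 a b (k := 3) (l := 4) rfl
    · exact pathMinor_mem_pathIdealG4 a b (k := 4) (l := 5) rfl
    · refine Ideal.mem_sup_right (Ideal.subset_span (List.mem_append_right _
        (mem_rightMinors.2 ⟨⟨i, by omega⟩, ?_⟩)))
      exact congrArg₂ _ rfl (mul_comm _ _)

lemma minor_mem_binomialEdgeIdeal {V : Type*} {G : SimpleGraph V} {v w : V} (h : G.Adj v w) :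
    X (Sum.inl v) * X (Sum.inr w) - X (Sum.inr v) * X (Sum.inl w) ∈ binomialEdgeIdeal K G :=
  Ideal.subset_span ⟨v, w, h, by rw [mul_comm (X (Sum.inr v))]⟩

lemma binomialEdgeIdeal_graphG4_eq (a b : ℕ) :
    binomialEdgeIdeal K (graphG4 (a + 3) (b + 3)) = pathIdealG4 K a b := by
  refine le_antisymm (Ideal.span_le.2 ?_) (sup_le (sup_le (Ideal.span_le.2 ?_)
    (Ideal.span_le.2 ?_)) (Ideal.span_le.2 ?_))
  · rintro f ⟨v, w, hvw, rfl⟩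
    rcases ((SimpleGraph.fromRel_adj _ _ _).1 hvw).2 with h | h
    exacts [minor_mem_pathIdealG4 h, minor_mem_pathIdealG4_symm (minor_mem_pathIdealG4 h)]
  · intro f hf
    simp only [pathMinors, innerVertices, chainMinors, xyPair, List.map_cons, List.map_nil,
      Set.mem_ofPred_eq, List.mem_cons, List.not_mem_nil, or_false] at hf
    rcases hf with rfl | rfl | rfl | rfl | rfl <;>
      refine minor_mem_binomialEdgeIdeal ?_ <;> simp [graphG4, g4Rel, middleVertices]
  · rw [Set.singleton_subset_iff]
    refine minor_mem_binomialEdgeIdeal ?_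
    simp [graphG4, g4Rel, middleVertices]
  · intro f hf
    rcases List.mem_append.1 hf with hf | hf
    · obtain ⟨i, rfl⟩ := mem_leftMinors.1 hf
      rw [← neg_sub]
      refine neg_mem (minor_mem_binomialEdgeIdeal ?_)
      simp [graphG4, g4Rel, leftVertex]
    · obtain ⟨i, rfl⟩ := mem_rightMinors.1 hf
      refine minor_mem_binomialEdgeIdeal ?_
      simp [graphG4, g4Rel, rightVertex]

end Graph

/-- For every graph `G` in the family `𝒢₄` (two paths of lengths
`r, s ≥ 3` joined by the edges `u_1—v_1` and `u_2—v_2`), the quotient `S/J_G` is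
Cohen–Macaulay. -/
theorem isCMQuot_binomialEdgeIdeal_graphG4
    (K : Type*) [Field K] (r s : ℕ) (hr : 3 ≤ r) (hs : 3 ≤ s) :
    IsCMQuot (binomialEdgeIdeal K (graphG4 r s)) := by
  obtain ⟨a, rfl⟩ := Nat.exists_eq_add_of_le' hr
  obtain ⟨b, rfl⟩ := Nat.exists_eq_add_of_le' hs
  rw [binomialEdgeIdeal_graphG4_eq]
  exact isCMQuot_of_path (nodup_vertices a b) (mem_vertices a b)

end
end

section
/- If J_G is an unmixed almost complete intersection binomial edge ideal and G has c connected components, then exactly c − 1 of the connected components of G are path graphs and exactly one connected component is a unicyclic graph (a connected graph containing exactly one cycle, i.e., with as many edges as vertices). -/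
open MvPolynomial

noncomputable section

/-- A graph is unicyclic if it is connected and contains exactly one cycle,
i.e. it has as many edges as vertices. -/
def IsUnicyclic {V : Type*} (H : SimpleGraph V) : Prop :=
  H.Connected ∧ H.edgeSet.ncard = Nat.card V

lemma htI_eq_height {R : Type*} [CommRing R] (P : PrimeSpectrum R) :
    htI P.asIdeal = Order.height P :=
  le_antisymm (iInf₂_le P le_rfl) (le_iInf₂ fun _ hQ => Order.height_mono hQ)

/-- Krull's height theorem, for `htI` and a prime minimal over a finitely generated ideal. -/
lemma htI_le_card_of_minimal_prime {R : Type*} [CommRing R] [IsNoetherianRing R] {I P : Ideal R}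
    (hIP : I ≤ P) {s : Finset R} (hP : P ∈ (Ideal.span (s : Set R)).minimalPrimes) :
    htI I ≤ s.card := by
  have hprime : P.IsPrime := hP.1.1
  calc htI I ≤ Order.height (⟨P, hprime⟩ : PrimeSpectrum R) :=
        iInf₂_le (f := fun (Q : PrimeSpectrum R) (_ : I ≤ Q.asIdeal) => Order.height Q) _ hIP
    _ = P.height := (PrimeSpectrum.height_eq_orderHeight _).symm
    _ ≤ s.card := Ideal.height_le_card_of_mem_minimalPrimes_span_finset hP

lemma binomialEdgeIdeal_le_sq {K : Type*} [Field K] {V : Type*} (G : SimpleGraph V) :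
    binomialEdgeIdeal K G ≤ idealOfVars (V ⊕ V) K ^ 2 := by
  refine Ideal.span_le.2 ?_
  rintro _ ⟨i, j, -, rfl⟩
  have hX (a : V ⊕ V) : (X a : MvPolynomial (V ⊕ V) K) ∈ idealOfVars (V ⊕ V) K :=
    Ideal.subset_span ⟨a, rfl⟩
  rw [pow_two]
  exact sub_mem (Ideal.mul_mem_mul (hX _) (hX _)) (Ideal.mul_mem_mul (hX _) (hX _))

section Generators

variable {K : Type*} [Field K] {V : Type*} [LinearOrder V]

/-- The binomial `x_i y_j - x_j y_i` attached to the pair `{i < j}`. -/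
def edgeBinomial (K : Type*) [Field K] {V : Type*} [LinearOrder V] (e : Sym2 V) :
    MvPolynomial (V ⊕ V) K :=
  X (Sum.inl e.inf) * X (Sum.inr e.sup) - X (Sum.inl e.sup) * X (Sum.inr e.inf)

lemma binomialEdgeIdeal_eq_span_image (G : SimpleGraph V) :
    binomialEdgeIdeal K G = Ideal.span (edgeBinomial K '' G.edgeSet) := by
  apply le_antisymm
  · refine Ideal.span_le.2 ?_
    rintro _ ⟨i, j, hij, rfl⟩
    have hmem : edgeBinomial K s(i, j) ∈ Ideal.span (edgeBinomial K '' G.edgeSet) :=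
      Ideal.subset_span ⟨_, hij, rfl⟩
    rcases le_total i j with h | h
    · simpa [edgeBinomial, h] using hmem
    · rw [SetLike.mem_coe, ← neg_mem_iff]
      simpa [edgeBinomial, h] using hmem
  · refine Ideal.span_le.2 ?_
    rintro _ ⟨e, he, rfl⟩
    induction e with
    | h i j =>
      rcases le_total i j with h | h
      · exact Ideal.subset_span ⟨i, j, he, by simp [edgeBinomial, h]⟩
      · exact Ideal.subset_span ⟨j, i, he.symm, by simp [edgeBinomial, h]⟩

/-- The exponent of the leading monomial `x_i y_j` of the binomial of `{i < j}`. -/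
def edgeExponent (e : Sym2 V) : V ⊕ V →₀ ℕ :=
  Finsupp.single (Sum.inl e.inf) 1 + Finsupp.single (Sum.inr e.sup) 1

lemma single_inl_add_single_inr_inj {i j k l : V} :
    (Finsupp.single (Sum.inl i) 1 + Finsupp.single (Sum.inr j) 1 : V ⊕ V →₀ ℕ) =
      Finsupp.single (Sum.inl k) 1 + Finsupp.single (Sum.inr l) 1 ↔ i = k ∧ j = l := by
  refine ⟨fun h => ⟨?_, ?_⟩, by rintro ⟨rfl, rfl⟩; rfl⟩
  · simpa [Finsupp.single_apply, eq_comm] using DFunLike.congr_fun h (Sum.inl i)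
  · simpa [Finsupp.single_apply, eq_comm] using DFunLike.congr_fun h (Sum.inr j)

lemma coeff_edgeExponent_edgeBinomial {e e' : Sym2 V} (he' : ¬ e'.IsDiag) :
    coeff (edgeExponent e) (edgeBinomial K e') = if e' = e then 1 else 0 := by
  have hmon (i j : V) : (X (Sum.inl i) * X (Sum.inr j) : MvPolynomial (V ⊕ V) K) =
      monomial (Finsupp.single (Sum.inl i) 1 + Finsupp.single (Sum.inr j) 1) 1 := by
    simp [X, monomial_mul]
  have hne : e'.inf < e'.sup := by
    induction e' with
    | h i j => simpa [eq_comm] using he'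
  have hcross : ¬ (e'.sup = e.inf ∧ e'.inf = e.sup) := by
    rintro ⟨h₁, h₂⟩
    exact absurd (h₁ ▸ h₂ ▸ hne) (not_lt.2 e.inf_le_sup)
  have heq : (e'.inf = e.inf ∧ e'.sup = e.sup) ↔ e' = e := Sym2.inf_eq_inf_and_sup_eq_sup
  rw [edgeBinomial, edgeExponent, coeff_sub, hmon, hmon, coeff_monomial, coeff_monomial]
  simp only [single_inl_add_single_inr_inj, hcross, heq, if_false, sub_zero]

/-- The linear map reading off the coefficients of the leading monomials of all edges. -/
def edgeCoeff (K : Type*) [Field K] {V : Type*} [LinearOrder V] (G : SimpleGraph V) :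
    MvPolynomial (V ⊕ V) K →ₗ[K] (G.edgeSet → K) :=
  LinearMap.pi fun e => lcoeff K (edgeExponent e.1)

lemma edgeCoeff_mul (G : SimpleGraph V) (p : MvPolynomial (V ⊕ V) K)
    {g : MvPolynomial (V ⊕ V) K} (hg : g ∈ binomialEdgeIdeal K G) :
    edgeCoeff K G (p * g) = constantCoeff p • edgeCoeff K G g := by
  have hlow := (mem_pow_idealOfVars_iff' 2 g).1 (binomialEdgeIdeal_le_sq G hg)
  ext e
  simp only [edgeCoeff, LinearMap.pi_apply, lcoeff_apply, Pi.smul_apply, smul_eq_mul]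
  rw [coeff_mul, Finset.sum_eq_single (0, edgeExponent e.1)]
  · rfl
  · rintro ⟨a, b⟩ hab hne
    rw [Finset.HasAntidiagonal.mem_antidiagonal] at hab
    have ha : a ≠ 0 := by
      rintro rfl
      exact hne (by simpa using hab)
    have hdeg : a.degree + b.degree = 2 := by
      rw [← map_add, hab]
      simp [edgeExponent]
    have ha' : a.degree ≠ 0 := (Finsupp.degree_eq_zero_iff a).not.2 ha
    rw [hlow b (by omega), mul_zero]
  · simp

lemma card_edgeSet_le_of_span_eq [Finite V] (G : SimpleGraph V)
    {s : Finset (MvPolynomial (V ⊕ V) K)}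
    (hs : Ideal.span (s : Set (MvPolynomial (V ⊕ V) K)) = binomialEdgeIdeal K G) :
    G.edgeSet.ncard ≤ s.card := by
  classical
  have : Fintype G.edgeSet := Fintype.ofFinite _
  let W : Submodule K (G.edgeSet → K) := Submodule.span K (s.image (edgeCoeff K G))
  have hW (g) (hg : g ∈ Ideal.span (s : Set (MvPolynomial (V ⊕ V) K))) : edgeCoeff K G g ∈ W := by
    induction hg using Submodule.span_induction with
    | mem x hx => exact Submodule.subset_span (by simpa using ⟨x, hx, rfl⟩)
    | zero => simp
    | add x y _ _ hx hy => rw [map_add]; exact add_mem hx hy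
    | smul p x hx h =>
      rw [smul_eq_mul, edgeCoeff_mul G p (hs ▸ hx)]
      exact W.smul_mem _ h
  have htop : W = ⊤ := by
    rw [eq_top_iff, ← (Pi.basisFun K G.edgeSet).span_eq, Submodule.span_le]
    rintro _ ⟨e, rfl⟩
    have hmem : edgeBinomial K e.1 ∈ binomialEdgeIdeal K G := by
      rw [binomialEdgeIdeal_eq_span_image]
      exact Ideal.subset_span ⟨_, e.2, rfl⟩
    have hbasis : Pi.basisFun K G.edgeSet e = edgeCoeff K G (edgeBinomial K e.1) := by
      ext e'
      simp [edgeCoeff, coeff_edgeExponent_edgeBinomial (G.not_isDiag_of_mem_edgeSet e.2),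
        Pi.single_apply, Subtype.ext_iff, eq_comm]
    rw [hbasis]
    exact hW _ (hs ▸ hmem)
  have hrank : Module.finrank K W = G.edgeSet.ncard := by
    rw [htop, finrank_top, Module.finrank_fintype_fun_eq_card, ← Nat.card_eq_fintype_card,
      Nat.card_coe_set_eq]
  rw [← hrank]
  exact (finrank_span_finset_le_card _).trans Finset.card_image_le

lemma exists_finset_span_eq_binomialEdgeIdeal [Finite V] (G : SimpleGraph V) :
    ∃ s : Finset (MvPolynomial (V ⊕ V) K), s.card ≤ G.edgeSet.ncard ∧
      Ideal.span (s : Set (MvPolynomial (V ⊕ V) K)) = binomialEdgeIdeal K G := by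
  have hfin : (edgeBinomial K '' G.edgeSet).Finite := G.edgeSet.toFinite.image _
  refine ⟨hfin.toFinset, ?_, by simp [binomialEdgeIdeal_eq_span_image]⟩
  rw [← Set.ncard_eq_toFinset_card _ hfin]
  exact Set.ncard_image_le

lemma mu_binomialEdgeIdeal [Finite V] (G : SimpleGraph V) :
    mu (binomialEdgeIdeal K G) = G.edgeSet.ncard := by
  obtain ⟨s, hcard, hs⟩ := exists_finset_span_eq_binomialEdgeIdeal (K := K) G
  apply le_antisymm
  · have hmu : mu (binomialEdgeIdeal K G) ≤ s.card := Nat.sInf_le ⟨s, rfl, hs⟩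
    exact hmu.trans hcard
  · obtain ⟨t, ht, hspan⟩ := Nat.sInf_mem
      (s := {k | ∃ s : Finset (MvPolynomial (V ⊕ V) K), s.card = k ∧
        Ideal.span (s : Set (MvPolynomial (V ⊕ V) K)) = binomialEdgeIdeal K G})
      ⟨_, s, rfl, hs⟩
    exact (card_edgeSet_le_of_span_eq G hspan).trans_eq ht

end Generators

section ComponentPrime

variable {K : Type*} [Field K] {V : Type*} [DecidableEq V]

/-- The parametrisation `x_i ↦ t_i`, `y_i ↦ t_i b_c`, where `c` is the connected component of `i`
in `F`, with `x_i, y_i ↦ 0` for `i ∈ T`. -/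
def componentHom (K : Type*) [Field K] (T : Finset V) (F : SimpleGraph V) :
    MvPolynomial (V ⊕ V) K →ₐ[K] MvPolynomial (V ⊕ F.ConnectedComponent) K :=
  aeval (Sum.elim (fun i => if i ∈ T then 0 else X (Sum.inl i))
    (fun i => if i ∈ T then 0 else X (Sum.inl i) * X (Sum.inr (F.connectedComponentMk i))))

@[simp]
lemma componentHom_inl (T : Finset V) (F : SimpleGraph V) (i : V) :
    componentHom K T F (X (Sum.inl i)) = if i ∈ T then 0 else X (Sum.inl i) := by
  simp [componentHom]

@[simp]
lemma componentHom_inr (T : Finset V) (F : SimpleGraph V) (i : V) :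
    componentHom K T F (X (Sum.inr i)) =
      if i ∈ T then 0 else X (Sum.inl i) * X (Sum.inr (F.connectedComponentMk i)) := by
  simp [componentHom]

/-- The prime generated by the variables at `T` and all the binomials of pairs of vertices
connected in `F`. -/
def componentPrime (K : Type*) [Field K] (T : Finset V) (F : SimpleGraph V) :
    PrimeSpectrum (MvPolynomial (V ⊕ V) K) :=
  ⟨RingHom.ker (componentHom K T F), RingHom.ker_isPrime _⟩

lemma mem_componentPrime {T : Finset V} {F : SimpleGraph V} {p : MvPolynomial (V ⊕ V) K} :
    p ∈ (componentPrime K T F).asIdeal ↔ componentHom K T F p = 0 :=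
  RingHom.mem_ker

lemma binomialEdgeIdeal_le_componentPrime {T : Finset V} {F G : SimpleGraph V}
    (h : ∀ i j, G.Adj i j → i ∉ T → j ∉ T → F.Reachable i j) :
    binomialEdgeIdeal K G ≤ (componentPrime K T F).asIdeal := by
  refine Ideal.span_le.2 ?_
  rintro _ ⟨i, j, hij, rfl⟩
  rw [SetLike.mem_coe, mem_componentPrime]
  by_cases hi : i ∈ T
  · simp [hi]
  by_cases hj : j ∈ T
  · simp [hj]
  have hc : F.connectedComponentMk i = F.connectedComponentMk j :=
    SimpleGraph.ConnectedComponent.eq.2 (h i j hij hi hj)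
  simp only [map_sub, map_mul, componentHom_inl, componentHom_inr, hi, hj, if_false, hc]
  ring

/-- A prime below `componentPrime K T F` which contains the binomials of the edges of `F` and the
variables at `T` is the whole of `componentPrime K T F`. -/
lemma componentPrime_le_of_le {T : Finset V} {F : SimpleGraph V}
    (hT : ∀ i ∈ T, ∀ j, ¬ F.Adj i j) {P : Ideal (MvPolynomial (V ⊕ V) K)} [P.IsPrime]
    (hF : binomialEdgeIdeal K F ≤ P)
    (hPT : ∀ i ∈ T, X (Sum.inl i) ∈ P ∧ X (Sum.inr i) ∈ P)
    (hP : P ≤ (componentPrime K T F).asIdeal) :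
    (componentPrime K T F).asIdeal ≤ P := by
  let Q := FractionRing (MvPolynomial (V ⊕ V) K ⧸ P)
  let θ : MvPolynomial (V ⊕ V) K →ₐ[K] Q :=
    (IsScalarTower.toAlgHom K (MvPolynomial (V ⊕ V) K ⧸ P) Q).comp (Ideal.Quotient.mkₐ K P)
  have hθ (p : MvPolynomial (V ⊕ V) K) : θ p = 0 ↔ p ∈ P := by
    rw [← Ideal.Quotient.eq_zero_iff_mem]
    exact FaithfulSMul.algebraMap_eq_zero_iff (MvPolynomial (V ⊕ V) K ⧸ P) Q
  let x (i : V) : Q := θ (X (Sum.inl i))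
  let y (i : V) : Q := θ (X (Sum.inr i))
  have hx {i : V} (hi : i ∉ T) : x i ≠ 0 := by
    intro h
    have := mem_componentPrime.1 (hP ((hθ _).1 h))
    simp [hi] at this
  have hslope {i j : V} (hij : F.Reachable i j) : y i / x i = y j / x j := by
    obtain ⟨w⟩ := hij
    induction w with
    | nil => rfl
    | @cons i j _ hadj _ ih =>
      rw [← ih, div_eq_div_iff (hx fun hi => hT i hi j hadj) (hx fun hj => hT j hj i hadj.symm)]
      have h := (hθ _).2 (hF (Ideal.subset_span ⟨i, j, hadj, rfl⟩))
      rw [map_sub, map_mul, map_mul, sub_eq_zero] at h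
      change x i * y j = x j * y i at h
      rw [mul_comm, ← h, mul_comm]
  let ψ : MvPolynomial (V ⊕ F.ConnectedComponent) K →ₐ[K] Q :=
    aeval (Sum.elim x fun c => y c.out / x c.out)
  have hcomp : ψ.comp (componentHom K T F) = θ := by
    ext (i | i)
    · by_cases hi : i ∈ T
      · simp [hi, (hθ _).2 (hPT i hi).1]
      · simp [hi, ψ, x]
    · by_cases hi : i ∈ T
      · simp [hi, (hθ _).2 (hPT i hi).2]
      · have hout : F.Reachable (F.connectedComponentMk i).out i :=
          SimpleGraph.ConnectedComponent.eq.1 (Quot.out_eq _)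
        simp only [AlgHom.comp_apply, componentHom_inr, hi, if_false, map_mul, ψ, aeval_X,
          Sum.elim_inl, Sum.elim_inr]
        rw [hslope hout, mul_div_cancel₀ _ (hx hi)]
  intro p hp
  rw [← hθ, ← hcomp, AlgHom.comp_apply, mem_componentPrime.1 hp, map_zero]

lemma componentPrime_mem_minimalPrimes {F G : SimpleGraph V} (hFG : F ≤ G)
    (hreach : F.Reachable = G.Reachable) :
    (componentPrime K ∅ F).asIdeal ∈ (binomialEdgeIdeal K G).minimalPrimes := by
  refine ⟨⟨(componentPrime K ∅ F).isPrime, binomialEdgeIdeal_le_componentPrime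
    fun i j hij _ _ => hreach ▸ hij.reachable⟩, fun P ⟨hP, hGP⟩ hle => ?_⟩
  refine componentPrime_le_of_le (by simp) (le_trans (Ideal.span_mono ?_) hGP) (by simp) hle
  rintro _ ⟨i, j, hij, rfl⟩
  exact ⟨i, j, hFG hij, rfl⟩

lemma componentPrime_mono {F F' : SimpleGraph V} (h : F' ≤ F) :
    componentPrime K ∅ F' ≤ componentPrime K ∅ F := by
  have hcomp : (rename (Sum.map id (SimpleGraph.ConnectedComponent.map
      (SimpleGraph.Hom.ofLE h)))).comp (componentHom K ∅ F') = componentHom K ∅ F := by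
    ext (i | i) <;> simp
  intro p hp
  rw [mem_componentPrime] at hp ⊢
  rw [← hcomp, AlgHom.comp_apply, hp, map_zero]

lemma componentPrime_lt {F F' : SimpleGraph V} (h : F' ≤ F) {i j : V} (hF : F.Reachable i j)
    (hF' : ¬ F'.Reachable i j) : componentPrime K ∅ F' < componentPrime K ∅ F := by
  refine lt_of_le_not_ge (componentPrime_mono h) fun hle => hF' ?_
  let f : MvPolynomial (V ⊕ V) K :=
    X (Sum.inl i) * X (Sum.inr j) - X (Sum.inl j) * X (Sum.inr i)
  have hf : f ∈ (componentPrime K ∅ F).asIdeal := by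
    have hc := SimpleGraph.ConnectedComponent.eq.2 hF
    rw [mem_componentPrime]
    simp only [f, map_sub, map_mul, componentHom_inl, componentHom_inr, Finset.notMem_empty,
      if_false, hc]
    ring
  have hf' := mem_componentPrime.1 (hle hf)
  have hX : (X (Sum.inl i) * X (Sum.inl j) : MvPolynomial (V ⊕ F'.ConnectedComponent) K) *
      (X (Sum.inr (F'.connectedComponentMk j)) - X (Sum.inr (F'.connectedComponentMk i))) = 0 := by
    rw [← hf']
    simp only [f, map_sub, map_mul, componentHom_inl, componentHom_inr, Finset.notMem_empty,
      if_false]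
    ring
  have hinj := (mul_eq_zero.1 hX).resolve_left (mul_ne_zero (X_ne_zero _) (X_ne_zero _))
  exact (SimpleGraph.ConnectedComponent.eq.1
    (Sum.inr_injective (X_injective (sub_eq_zero.1 hinj)))).symm

lemma card_edgeSet_le_height_componentPrime [Finite V] {F : SimpleGraph V} (hF : F.IsAcyclic) :
    (F.edgeSet.ncard : ℕ∞) ≤ Order.height (componentPrime K ∅ F) := by
  induction hk : F.edgeSet.ncard generalizing F with
  | zero => simp
  | succ k ih =>
    obtain ⟨e, he⟩ : F.edgeSet.Nonempty := (Set.ncard_pos).1 (by omega)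
    induction e with
    | h i j =>
      have hle := F.deleteEdges_le {s(i, j)}
      have hcard : (F.deleteEdges {s(i, j)}).edgeSet.ncard = k := by
        rw [SimpleGraph.edgeSet_deleteEdges, Set.ncard_sdiff_singleton_of_mem he, hk]
        rfl
      have hbridge := SimpleGraph.isAcyclic_iff_forall_adj_isBridge.1 hF he
      push_cast
      exact (add_le_add_left (ih (hF.anti hle) hcard) 1).trans
        (Order.height_add_one_le (componentPrime_lt hle (SimpleGraph.Adj.reachable he) hbridge))

end ComponentPrime

lemma htI_binomialEdgeIdeal_le {K : Type*} [Field K] {V : Type*} [LinearOrder V] [Finite V]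
    {T : Finset V} {F G : SimpleGraph V} (hT : ∀ i ∈ T, ∀ j, ¬ F.Adj i j)
    (h : ∀ i j, G.Adj i j → i ∉ T → j ∉ T → F.Reachable i j) :
    htI (binomialEdgeIdeal K G) ≤ (F.edgeSet.ncard + 2 * T.card : ℕ) := by
  classical
  obtain ⟨s, hcard, hs⟩ := exists_finset_span_eq_binomialEdgeIdeal (K := K) F
  let t : Finset (MvPolynomial (V ⊕ V) K) :=
    s ∪ (T.image (fun i => X (Sum.inl i)) ∪ T.image (fun i => X (Sum.inr i)))
  have ht : t.card ≤ F.edgeSet.ncard + 2 * T.card := by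
    have h₁ : t.card ≤ _ := Finset.card_union_le _ _
    have h₂ := Finset.card_union_le (T.image fun i => (X (Sum.inl i) : MvPolynomial (V ⊕ V) K))
      (T.image fun i => X (Sum.inr i))
    have h₃ := Finset.card_image_le (s := T)
      (f := fun i => (X (Sum.inl i) : MvPolynomial (V ⊕ V) K))
    have h₄ := Finset.card_image_le (s := T)
      (f := fun i => (X (Sum.inr i) : MvPolynomial (V ⊕ V) K))
    omega
  refine (htI_le_card_of_minimal_prime (P := (componentPrime K T F).asIdeal) (s := t)
    (binomialEdgeIdeal_le_componentPrime h) ⟨⟨(componentPrime K T F).isPrime, ?_⟩, ?_⟩).trans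
    (by exact_mod_cast ht)
  · refine Ideal.span_le.2 fun p hp => ?_
    simp only [t, Finset.coe_union, Finset.coe_image, Set.mem_union, Set.mem_image,
      Finset.mem_coe] at hp
    rcases hp with hp | ⟨i, hi, rfl⟩ | ⟨i, hi, rfl⟩
    · exact binomialEdgeIdeal_le_componentPrime (fun i j hij _ _ => hij.reachable)
        (hs ▸ Ideal.subset_span hp)
    · simp [mem_componentPrime, hi]
    · simp [mem_componentPrime, hi]
  · rintro P ⟨hP, htP⟩ hle
    have hmem {p} (hp : p ∈ t) : p ∈ P := htP (Ideal.subset_span hp)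
    refine componentPrime_le_of_le hT ?_ (fun i hi => ⟨hmem ?_, hmem ?_⟩) hle
    · rw [← hs]
      exact Ideal.span_le.2 fun p hp => hmem (Finset.mem_union_left _ hp)
    · simp only [t, Finset.mem_union, Finset.mem_image]
      exact Or.inr (Or.inl ⟨i, hi, rfl⟩)
    · simp only [t, Finset.mem_union, Finset.mem_image]
      exact Or.inr (Or.inr ⟨i, hi, rfl⟩)

namespace SimpleGraph

lemma Connected.exists_adj_dist_eq {W : Type*} {H : SimpleGraph W} (hH : H.Connected) {r a : W}
    {d : ℕ} (ha : H.dist a r = d + 1) : ∃ u, H.Adj a u ∧ H.dist u r = d := by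
  obtain ⟨w, hw⟩ := hH.exists_walk_length_eq_dist a r
  cases w with
  | nil => simp at ha
  | @cons _ u _ hau p =>
    refine ⟨u, hau, ?_⟩
    have h₁ := dist_le p
    have h₂ := hH.dist_triangle (u := a) (v := u) (w := r)
    rw [dist_eq_one_iff_adj.2 hau] at h₂
    rw [Walk.length_cons] at hw
    omega

/-- A connected graph without vertices of degree at least three, having a vertex of degree at most
one, is a path graph. -/
lemma Connected.isPathGraph {W : Type*} [Finite W] {H : SimpleGraph W} (hH : H.Connected)
    (hdeg : ∀ v a b c, H.Adj v a → H.Adj v b → H.Adj v c → a = b ∨ a = c ∨ b = c) {r : W}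
    (hr : ∀ a b, H.Adj r a → H.Adj r b → a = b) : IsPathGraph H := by
  have hinj (d : ℕ) : ∀ a b, H.dist a r = d → H.dist b r = d → a = b := by
    induction d with
    | zero =>
      intro a b ha hb
      rw [hH.dist_eq_zero_iff.1 ha, hH.dist_eq_zero_iff.1 hb]
    | succ d ih =>
      intro a b ha hb
      obtain ⟨u, hau, hu⟩ := hH.exists_adj_dist_eq ha
      obtain ⟨u', hbu, hu'⟩ := hH.exists_adj_dist_eq hb
      obtain rfl := ih u u' hu hu'
      cases d with
      | zero =>
        obtain rfl := hH.dist_eq_zero_iff.1 hu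
        exact hr a b hau.symm hbu.symm
      | succ d =>
        obtain ⟨w, huw, hw⟩ := hH.exists_adj_dist_eq hu
        rcases hdeg u a b w hau.symm hbu.symm huw with h | rfl | rfl
        · exact h
        · omega
        · omega
  have hlevel (d : ℕ) : ∀ a, H.dist a r = d → ∀ k ≤ d, ∃ u, H.dist u r = k := by
    induction d with
    | zero => exact fun a ha k hk => ⟨a, by omega⟩
    | succ d ih =>
      intro a ha k hk
      obtain rfl | hk := hk.eq_or_lt
      · exact ⟨a, ha⟩
      · obtain ⟨u, -, hu⟩ := hH.exists_adj_dist_eq ha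
        exact ih u hu k (by omega)
  have hlt (a : W) : H.dist a r < Nat.card W := by
    choose f hf using fun k : Fin (H.dist a r + 1) => hlevel _ a rfl k (by omega)
    have hcard := Nat.card_le_card_of_injective f fun k l hkl => by
      ext
      rw [← hf k, ← hf l, hkl]
    rw [Nat.card_eq_fintype_card, Fintype.card_fin] at hcard
    omega
  let e : W → Fin (Nat.card W) := fun a => ⟨H.dist a r, hlt a⟩
  have he : e.Bijective :=
    (Nat.bijective_iff_injective_and_card e).2
      ⟨fun a b hab => hinj _ a b (Fin.ext_iff.1 hab) rfl, by simp⟩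
  refine ⟨_, Equiv.ofBijective e he, fun a b => ?_⟩
  change _ ↔ H.dist a r + 1 = H.dist b r ∨ H.dist b r + 1 = H.dist a r
  constructor
  · intro hab
    have h₁ := hH.dist_triangle (u := a) (v := b) (w := r)
    have h₂ := hH.dist_triangle (u := b) (v := a) (w := r)
    rw [dist_eq_one_iff_adj.2 hab] at h₁
    rw [dist_eq_one_iff_adj.2 hab.symm] at h₂
    have hne : H.dist a r ≠ H.dist b r := fun h => hab.ne (hinj _ a b h rfl)
    omega
  · rintro (h | h)
    · obtain ⟨u, hbu, hu⟩ := hH.exists_adj_dist_eq h.symm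
      exact (hinj _ u a hu rfl ▸ hbu).symm
    · obtain ⟨u, hau, hu⟩ := hH.exists_adj_dist_eq h.symm
      exact hinj _ u b hu rfl ▸ hau

lemma IsTree.isPathGraph {W : Type*} [Finite W] {H : SimpleGraph W} (hH : H.IsTree)
    (hdeg : ∀ v a b c, H.Adj v a → H.Adj v b → H.Adj v c → a = b ∨ a = c ∨ b = c) :
    IsPathGraph H := by
  classical
  have : Fintype W := Fintype.ofFinite W
  have hne := hH.connected.nonempty
  rcases subsingleton_or_nontrivial W with hW | hW
  · exact hH.connected.isPathGraph hdeg (r := hne.some) fun a b _ _ => Subsingleton.elim a b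
  · obtain ⟨r, hr⟩ := hH.exists_vert_degree_one_of_nontrivial
    obtain ⟨u, -, hu⟩ := degree_eq_one_iff_existsUnique_adj.1 hr
    exact hH.connected.isPathGraph hdeg fun a b ha hb => (hu a ha).trans (hu b hb).symm

/-- A spanning forest restricts to a spanning tree of each connected component. -/
lemma IsAcyclic.isTree_induce_compSupp {V : Type*} {F G : SimpleGraph V} (hF : F.IsAcyclic)
    (hreach : F.Reachable = G.Reachable) (c : G.ConnectedComponent) :
    (F.induce (compSupp G c)).IsTree := by
  refine ⟨?_, hF.induce _⟩
  induction c using ConnectedComponent.ind with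
  | h v =>
    have hsupp : compSupp G (G.connectedComponentMk v) = (F.connectedComponentMk v).supp := by
      ext w
      simp [compSupp, hreach]
    rw [hsupp]
    exact (F.connectedComponentMk v).connected_toSimpleGraph

lemma Reachable.deleteIncidenceSet {V : Type*} {F : SimpleGraph V} {i j v : V}
    (hij : F.Reachable i j) (hv : ¬ F.Reachable i v) : (F.deleteIncidenceSet v).Reachable i j := by
  obtain ⟨w⟩ := hij
  induction w with
  | nil => rfl
  | @cons i k _ hik _ ih =>
    have hk : ¬ F.Reachable k v := fun h => hv (hik.reachable.trans h)
    refine (Adj.reachable (deleteIncidenceSet_adj.2 ⟨hik, ?_, ?_⟩)).trans (ih hk)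
    · rintro rfl
      exact hv .rfl
    · rintro rfl
      exact hk .rfl

lemma card_edgeSet_deleteIncidenceSet_add_three_le {V : Type*} [Finite V] {F : SimpleGraph V}
    {v a b c : V} (ha : F.Adj v a) (hb : F.Adj v b) (hc : F.Adj v c) (hab : a ≠ b) (hac : a ≠ c)
    (hbc : b ≠ c) : (F.deleteIncidenceSet v).edgeSet.ncard + 3 ≤ F.edgeSet.ncard := by
  have hsub : ({s(v, a), s(v, b), s(v, c)} : Set (Sym2 V)) ⊆ F.incidenceSet v := by
    rintro _ (rfl | rfl | rfl)
    · exact ⟨ha, by simp⟩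
    · exact ⟨hb, by simp⟩
    · exact ⟨hc, by simp⟩
  have hthree : ({s(v, a), s(v, b), s(v, c)} : Set (Sym2 V)).ncard = 3 :=
    Set.ncard_eq_three.2 ⟨_, _, _, by simp [hab, ha.ne'], by simp [hac, ha.ne'],
      by simp [hbc, hb.ne'], rfl⟩
  have hle := Set.ncard_le_ncard hsub
  have hdiff := Set.ncard_sdiff_add_ncard_of_subset (F.incidenceSet_subset v)
  rw [edgeSet_deleteIncidenceSet]
  omega

/-- If a connected graph has exactly one edge more than a spanning tree, it is unicyclic. -/
lemma IsTree.isUnicyclic_of_edgeSet_eq_insert {W : Type*} [Finite W] {T H : SimpleGraph W}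
    (hT : T.IsTree) {e : Sym2 W} (he : e ∉ T.edgeSet) (hH : H.edgeSet = insert e T.edgeSet) :
    IsUnicyclic H := by
  classical
  have : Fintype W := Fintype.ofFinite W
  have hle : T ≤ H := edgeSet_subset_edgeSet.1 (hH ▸ Set.subset_insert _ _)
  refine ⟨hT.connected.mono hle, ?_⟩
  rw [hH, Set.ncard_insert_of_notMem he, Nat.card_eq_fintype_card, ← hT.card_edgeFinset,
    ← coe_edgeFinset, Set.ncard_coe_finset]

end SimpleGraph

/-- If `J_G` is an unmixed almost complete intersection binomial
edge ideal and `G` has `c` connected components, then exactly one connected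
component of `G` is a unicyclic graph and the other `c - 1` connected components
are path graphs. -/
theorem binomialEdgeIdeal_unmixed_aci_components
    (K : Type*) [Field K] (n : ℕ) (G : SimpleGraph (Fin n))
    (hACI : (mu (binomialEdgeIdeal K G) : ℕ∞) = htI (binomialEdgeIdeal K G) + 1)
    (hUnmixed : IsUnmixed (binomialEdgeIdeal K G)) :
    ∃ c₀ : G.ConnectedComponent, IsUnicyclic (G.induce (compSupp G c₀)) ∧
      ∀ c : G.ConnectedComponent, c ≠ c₀ → IsPathGraph (G.induce (compSupp G c)) := by
  obtain ⟨F, hFG, hF, hreach⟩ := G.exists_isAcyclic_reachable_eq_le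
  have hht : htI (binomialEdgeIdeal K G) = F.edgeSet.ncard := by
    apply le_antisymm
    · simpa using htI_binomialEdgeIdeal_le (K := K) (T := ∅) (F := F) (G := G) (by simp)
        fun i j hij _ _ => hreach ▸ hij.reachable
    · rw [← hUnmixed _ (componentPrime_mem_minimalPrimes hFG hreach), htI_eq_height]
      exact card_edgeSet_le_height_componentPrime hF
  have hcard : G.edgeSet.ncard = F.edgeSet.ncard + 1 := by
    rw [mu_binomialEdgeIdeal, hht] at hACI
    exact_mod_cast hACI
  have hsub : F.edgeSet ⊆ G.edgeSet := SimpleGraph.edgeSet_subset_edgeSet.2 hFG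
  obtain ⟨e, he⟩ : ∃ e, G.edgeSet \ F.edgeSet = {e} := by
    have := Set.ncard_sdiff_add_ncard_of_subset hsub
    exact Set.ncard_eq_one.1 (by omega)
  obtain ⟨a, b⟩ := e
  change G.edgeSet \ F.edgeSet = {s(a, b)} at he
  obtain ⟨hGab, hFab⟩ : G.Adj a b ∧ ¬ F.Adj a b := by
    have : s(a, b) ∈ G.edgeSet \ F.edgeSet := he ▸ rfl
    simpa using this
  have hadj {i j : Fin n} (hij : G.Adj i j) : F.Adj i j ∨ s(i, j) = s(a, b) := by
    by_contra! h
    have hmem : s(i, j) ∈ G.edgeSet \ F.edgeSet := ⟨hij, h.1⟩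
    rw [he] at hmem
    exact h.2 hmem
  have hcomp : G.connectedComponentMk b = G.connectedComponentMk a :=
    SimpleGraph.ConnectedComponent.eq.2 hGab.symm.reachable
  refine ⟨G.connectedComponentMk a, ?_, fun c hc => ?_⟩
  · refine (hF.isTree_induce_compSupp hreach _).isUnicyclic_of_edgeSet_eq_insert
      (e := s(⟨a, rfl⟩, ⟨b, hcomp⟩)) (by simpa using hFab) ?_
    ext ⟨⟨i, hi⟩, ⟨j, hj⟩⟩
    change G.Adj i j ↔ s(_, _) = s(_, _) ∨ F.Adj i j
    have hab : s((⟨i, hi⟩ : compSupp G (G.connectedComponentMk a)), ⟨j, hj⟩) =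
        s(⟨a, rfl⟩, ⟨b, hcomp⟩) ↔ s(i, j) = s(a, b) := by
      simp only [Sym2.eq_iff, Subtype.ext_iff]
    rw [hab]
    refine ⟨fun h => (hadj h).symm, ?_⟩
    rintro (h | h)
    · exact G.mem_edgeSet.1 (h ▸ hGab)
    · exact hFG h
  · have hsame : G.induce (compSupp G c) = F.induce (compSupp G c) := by
      ext ⟨i, hi⟩ ⟨j, hj⟩
      refine ⟨fun h => (hadj h).resolve_right fun h' => hc ?_, fun h => hFG h⟩
      rcases Sym2.eq_iff.1 h' with ⟨rfl, -⟩ | ⟨rfl, -⟩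
      · exact hi.symm
      · exact hi.symm.trans hcomp
    rw [hsame]
    refine (hF.isTree_induce_compSupp hreach c).isPathGraph ?_
    rintro ⟨v, hv⟩ ⟨p, hp⟩ ⟨q, hq⟩ ⟨r, hr⟩ hvp hvq hvr
    by_contra! h
    simp only [ne_eq, Subtype.mk.injEq] at h
    have hdel := SimpleGraph.card_edgeSet_deleteIncidenceSet_add_three_le
      (F := F) (v := v) hvp hvq hvr h.1 h.2.1 h.2.2
    have hle := htI_binomialEdgeIdeal_le (K := K) (T := {v}) (F := F.deleteIncidenceSet v) (G := G)
      (by simp [SimpleGraph.deleteIncidenceSet_adj]) fun i j hij hi hj => by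
        rcases hadj hij with h | h
        · exact (SimpleGraph.deleteIncidenceSet_adj.2
            ⟨h, by simpa using hi, by simpa using hj⟩).reachable
        · refine SimpleGraph.Reachable.deleteIncidenceSet (hreach ▸ hij.reachable) fun hiv => hc ?_
          rw [hreach] at hiv
          have hvi : c = G.connectedComponentMk i :=
            hv.symm.trans (SimpleGraph.ConnectedComponent.eq.2 hiv.symm)
          rcases Sym2.eq_iff.1 h with ⟨rfl, -⟩ | ⟨rfl, -⟩
          · exact hvi
          · exact hvi.trans hcomp
    rw [hht] at hle
    have hle' : F.edgeSet.ncard ≤ (F.deleteIncidenceSet v).edgeSet.ncard + 2 * 1 := by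
      exact_mod_cast hle
    omega

end
end
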